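/- arXiv:1109.2225 — 2 statements merged into one kernel-verified Lean document; each statement's English description precedes it below -/
import Mathlib

section
/- Let S be a nonempty set of codes of finite presentations that is closed under isomorphism (if c ∈ S and the group presented by a code c' is isomorphic to the group presented by c, then c' ∈ S). Suppose the commensurability problem is solvable within S, i.e. there is a computable function d on pairs of codes such that for all c, c' ∈ S, d (c, c') = true if and only if the groups presented by c and c' are commensurable. Then S is not a computable (decidable) set; i.e. there is no computable function m on codes with m c = true if and only if c ∈ S. -/
/-!
Fix a code `c` in `S`, and write `G` for the group it presents. If `S` were decidable and
commensurability solvable within `S`, one could decide whether a code `c'` both lies in `S` and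
presents a group commensurable with `G`. It is therefore enough to compute, from a program, a code
whose group is isomorphic to `G` if the program halts and not commensurable with `G` if it does not
(`exists_family`); this would solve the halting problem.

Such codes come from finite presentations, computable from programs, of groups `P` that are trivial
if the program halts and have an element of infinite order otherwise (`pres_trivial`,
`pres_infinite`). By `dichotomy`, one of the constructions `P ↦ G ∗ P` and `P ↦ G × P` leads out of
the commensurability class of `G` as soon as `P` has an element of infinite order, and both give
back `G` when `P` is trivial. Indeed, having two infinite commuting subgroups whose product contains
a power of every element (`VirtProd`) is a commensurability invariant. An infinite `G` without this
property is not commensurable with `G × P`, which has it. If `G` has it, then `G` is not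
commensurable with `G ∗ P`, which does not have it because the factors of a free product are
malnormal. If `G` is finite, then `G ∗ P` is infinite.

The groups `P` are obtained as follows. A universal machine is simulated by a finite system of
affine moves between integer vectors, each acting as `a i + M i * u ↦ a' i + M' i * u`
(`machine`); as the machine is deterministic, connectivity to the halting configuration in the
undirected sense is halting. A configuration `(s, β)` is encoded by the conjugate of a letter `t_s`
by the monomial `x ^ β`, and each move by a letter `r_i` that conjugates one family of encoded
configurations to another while commuting with a letter `k`. If `k` commutes with the encoded
halting configuration, it commutes with everything connected to it. Conversely (`model`), take the
right-angled Artin group in which `k` commutes with exactly the configurations that lead to halting,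
extended by the translations `x ^ u`; the two subgroups to be conjugated by `r_i` are isomorphic,
since connectivity is invariant under the move, and HNN extensions provide the letters `r_i`. There
the commutator `w` of `k` with an encoded non-halting initial configuration has infinite order, as
one sees in the infinite dihedral group.

Finally, relations are added through which `w = 1` kills all generators, while `w` keeps its
infinite order otherwise (`Collapse`, `exists_collapse`). These identify a free abelian subgroup of
rank two with the one generated by two elementary matrices in the first row of `SL₃(ℤ)`, where
killing one elementary matrix kills all of them.
-/

/-- The element of `FreeGroup (Fin n)` represented by a coded word: an entry `(i, b)`
denotes the `(i % n)`-th generator if `b = true` and its inverse if `b = false`. -/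
def wordToFree (n : ℕ) (w : List (ℕ × Bool)) : FreeGroup (Fin n) :=
  (w.map fun p =>
    if h : 0 < n then
      (if p.2 then FreeGroup.of (⟨p.1 % n, Nat.mod_lt _ h⟩ : Fin n)
       else (FreeGroup.of (⟨p.1 % n, Nat.mod_lt _ h⟩ : Fin n))⁻¹)
    else 1).prod

/-- The set of relators of the finite presentation coded by `c`. -/
def codeRels (c : ℕ × List (List (ℕ × Bool))) : Set (FreeGroup (Fin c.1)) :=
  {g | ∃ w ∈ c.2, g = wordToFree c.1 w}

/-- The group presented by the code `c`: the quotient of `FreeGroup (Fin c.1)` by the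
normal closure of the relators. -/
abbrev codeGroup (c : ℕ × List (List (ℕ × Bool))) : Type :=
  PresentedGroup (codeRels c)

/-- Two groups are commensurable if they have isomorphic subgroups of finite index. -/
def GroupCommensurable (G : Type*) (H : Type*) [Group G] [Group H] : Prop :=
  ∃ (K₁ : Subgroup G) (K₂ : Subgroup H), K₁.index ≠ 0 ∧ K₂.index ≠ 0 ∧ Nonempty (K₁ ≃* K₂)

namespace CommSolv

/-! ### Affine machines -/

/-- A finite system of affine moves between configurations in `St × (J → ℤ)`: the move `i`
joins `(s i, a i + M i * u)` with `(s' i, a' i + M' i * u)`, for every integer vector `u`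
(products of vectors being taken coordinatewise). -/
structure Sys where
  /-- Index type of the integer registers. -/
  J : Type
  /-- Control states. -/
  St : Type
  /-- Index type of the moves. -/
  I : Type
  [finJ : Finite J]
  [finSt : Finite St]
  [finI : Finite I]
  /-- source states -/
  s : I → St
  /-- target states -/
  s' : I → St
  /-- source offsets -/
  a : I → J → ℤ
  /-- target offsets -/
  a' : I → J → ℤ
  /-- source scalings -/
  M : I → J → ℤ
  /-- target scalings -/
  M' : I → J → ℤ
  hM : ∀ i j, M i j ≠ 0
  hM' : ∀ i j, M' i j ≠ 0

/-- One application of a move of the system. -/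
def Sys.Move (T : Sys) (p q : T.St × (T.J → ℤ)) : Prop :=
  ∃ i u, p = (T.s i, T.a i + T.M i * u) ∧ q = (T.s' i, T.a' i + T.M' i * u)

/-- Two configurations are connected if one is reached from the other by moves and inverse
moves. -/
def Sys.Conn (T : Sys) : T.St × (T.J → ℤ) → T.St × (T.J → ℤ) → Prop :=
  Relation.EqvGen T.Move

section Machine
open Turing Turing.PartrecToTM2 StateTransition

/-- A control state: a statement still to be executed together with the local variable of the
stack machine, or `none` once the machine has halted. -/
abbrev Loc := Option (TM2.Stmt (fun _ : K' => Γ') Λ' (Option Γ') × Option Γ')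

/-- The digit standing for a stack symbol; the digit `0` marks the bottom of the stack. -/
def dig : Γ' → ℤ
  | .bit0 => 1
  | .bit1 => 2
  | .cons => 3
  | .consₗ => 4

/-- The stack symbol read off a digit. -/
def undig (z : ℤ) : Option Γ' :=
  if z = 1 then some .bit0 else if z = 2 then some .bit1 else
    if z = 3 then some .cons else if z = 4 then some .consₗ else none

/-- A stack as a number in base `5`, its top being the last digit. -/
def enc : List Γ' → ℤ
  | [] => 0
  | a :: l => dig a + 5 * enc l

/-- The effect of the first instruction of a statement when the stack it concerns is `d + 5 * u`
with `0 ≤ d < 5`: for a value `(a, b, l)`, the stack becomes `a + b * u` and the control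
state `l`. -/
def act : TM2.Stmt (fun _ : K' => Γ') Λ' (Option Γ') → Option Γ' → ℤ → ℤ × ℤ × Loc
  | .push _ f q, v, d => (5 * d + dig (f v), 25, some (q, v))
  | .peek _ f q, v, d => (d, 5, some (q, f v (undig d)))
  | .pop _ f q, v, d => (0, 1, some (q, f v (undig d)))
  | .load f q, v, d => (d, 5, some (q, f v))
  | .branch p q₁ q₂, v, d => (d, 5, some (if p v then q₁ else q₂, v))
  | .goto l, v, d => (d, 5, some (tr (l v), v))
  | .halt, _, d => (d, 5, none)

/-- The stack concerned by the first instruction of a statement; `main` by convention for the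
instructions that concern none. -/
def stk : TM2.Stmt (fun _ : K' => Γ') Λ' (Option Γ') → K'
  | .push k _ _ => k
  | .peek k _ _ => k
  | .pop k _ _ => k
  | _ => .main

/-- The stack machine performing one instruction at a time, its stacks being numbers. -/
def step5 : Loc × (K' → ℤ) → Option (Loc × (K' → ℤ))
  | (none, _) => none
  | (some (q, v), α) =>
    some ((act q v (α (stk q) % 5)).2.2,
      Function.update α (stk q) ((act q v (α (stk q) % 5)).1 +
        (act q v (α (stk q) % 5)).2.1 * (α (stk q) / 5)))

/-- A configuration of the stack machine, its stacks being replaced by numbers. -/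
def trC (c : Cfg') : Loc × (K' → ℤ) := (c.l.map fun l => (tr l, c.var), fun k => enc (c.stk k))

lemma undig_enc (l : List Γ') : undig (enc l % 5) = l.head? := by
  cases l with
  | nil => rfl
  | cons a l => cases a <;> simp [enc, dig, undig]

lemma enc_div (l : List Γ') : enc l / 5 = enc l.tail := by
  cases l with
  | nil => rfl
  | cons a l => cases a <;> simp [enc, dig] <;> omega

lemma update_enc (S : K' → List Γ') (k : K') (l : List Γ') :
    (fun j => enc (Function.update S k l j)) = Function.update (fun j => enc (S j)) k (enc l) := by
  funext j
  by_cases h : j = k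
  · subst h; simp
  · simp [h]

/-- One step of the stack machine is a nonempty sequence of instructions. -/
lemma reach_stepAux (q : TM2.Stmt (fun _ : K' => Γ') Λ' (Option Γ')) (v : Option Γ')
    (S : K' → List Γ') :
    Reaches₁ step5 (some (q, v), fun k => enc (S k)) (trC (TM2.stepAux q v S)) := by
  have keep : ∀ (α : K' → ℤ) (k : K'), Function.update α k (α k % 5 + 5 * (α k / 5)) = α := by
    intro α k
    rw [Int.emod_add_mul_ediv, Function.update_eq_self]
  induction q generalizing v S with
  | push k f q ih =>
    refine Relation.TransGen.head (b := (some (q, v), fun j => enc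
      (Function.update S k (f v :: S k) j))) ?_ (ih _ _)
    rw [update_enc]
    simp only [step5, act, stk, Option.mem_def, Option.some.injEq, Prod.mk.injEq, true_and]
    congr 1
    simp only [enc]
    omega
  | peek k f q ih =>
    refine Relation.TransGen.head (b := (some (q, f v (S k).head?), fun j => enc (S j))) ?_ (ih _ _)
    simp [step5, act, stk, keep, undig_enc]
  | pop k f q ih =>
    refine Relation.TransGen.head (b := (some (q, f v (S k).head?), fun j => enc
      (Function.update S k (S k).tail j))) ?_ (ih _ _)
    rw [update_enc]
    simp [step5, act, stk, undig_enc, enc_div]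
  | load f q ih =>
    refine Relation.TransGen.head (b := (some (q, f v), fun j => enc (S j))) ?_ (ih _ _)
    simp [step5, act, stk, keep]
  | branch p q₁ q₂ ih₁ ih₂ =>
    refine Relation.TransGen.head (b := (some (if p v then q₁ else q₂, v), fun j => enc (S j)))
      ?_ ?_
    · simp [step5, act, stk, keep]
    · cases h : p v
      · simp only [TM2.stepAux, h, cond_false]; exact ih₂ _ _
      · simp only [TM2.stepAux, h, cond_true]; exact ih₁ _ _
  | goto l =>
    refine Relation.TransGen.single ?_
    simp [step5, act, stk, keep, trC]
  | halt =>
    refine Relation.TransGen.single ?_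
    simp [step5, act, stk, keep, trC]

lemma step5_dom (c : Cfg') :
    (StateTransition.eval step5 (trC c)).Dom ↔ (StateTransition.eval (TM2.step tr) c).Dom := by
  refine tr_eval_dom (tr := fun a b => trC a = b) ?_ rfl
  apply fun_respects.2
  rintro ⟨_ | l, v, S⟩
  · rfl
  · exact reach_stepAux _ _ _

/-- The finitely many control states visited on behalf of the program `c`. -/
def locs (c : ToPartrec.Code) : Set Loc :=
  {x | ∀ p ∈ x, some p.1 ∈ TM2.stmts tr (codeSupp c .halt)}

lemma locs_finite (c : ToPartrec.Code) : (locs c).Finite := by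
  have h1 : ({q : Option (TM2.Stmt (fun _ : K' => Γ') Λ' (Option Γ')) |
      q ∈ TM2.stmts tr (codeSupp c .halt)} ×ˢ (Set.univ : Set (Option Γ'))).Finite :=
    (Finset.finite_toSet _).prod Set.finite_univ
  refine Set.Finite.subset (h1.image fun p => p.1.map fun q => (q, p.2)) ?_
  rintro (_ | ⟨q, v⟩) hx
  · refine ⟨(none, none), ⟨?_, trivial⟩, rfl⟩
    simp [TM2.stmts]
  · exact ⟨(some q, v), ⟨hx _ rfl, trivial⟩, rfl⟩

instance (c : ToPartrec.Code) : Finite (locs c) := (locs_finite c).to_subtype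

lemma act_mem (c : ToPartrec.Code) (q) (v : Option Γ') (d : ℤ)
    (h : some q ∈ TM2.stmts tr (codeSupp c .halt)) : (act q v d).2.2 ∈ locs c := by
  have sub : ∀ q', q' ∈ TM2.stmts₁ q → some q' ∈ TM2.stmts tr (codeSupp c .halt) :=
    fun q' hq => TM2.stmts_trans hq h
  cases q with
  | push k f q | peek k f q | pop k f q | load f q =>
    rintro _ ⟨⟩
    exact sub _ (by simp [TM2.stmts₁, TM2.stmts₁_self])
  | branch p q₁ q₂ =>
    rintro _ ⟨⟩
    apply sub
    cases p v <;> simp [TM2.stmts₁, TM2.stmts₁_self]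
  | goto l =>
    rintro _ ⟨⟩
    have := @TM2.stmts_supportsStmt _ _ _ _ ⟨trNormal c .halt⟩ _ _ _ (tr_supports c .halt) h
    have := this v
    simp only [TM2.stmts, Finset.mem_insertNone, Finset.mem_biUnion]
    rintro _ ⟨⟩
    exact ⟨l v, this, TM2.stmts₁_self⟩
  | halt => rintro _ ⟨⟩

instance : Finite K' := by
  refine Finite.of_injective (fun k : K' => match k with
    | .main => (0 : Fin 4) | .rev => 1 | .aux => 2 | .stack => 3) ?_
  rintro (_ | _) (_ | _) <;> simp

/-- Scaling vector equal to `b` at `k` and to `1` elsewhere. -/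
def scal (k : K') (b : ℤ) : K' → ℤ := Function.update 1 k b

lemma scal_ne (k : K') (b : ℤ) (hb : b ≠ 0) (j : K') : scal k b j ≠ 0 := by
  unfold scal
  by_cases h : j = k
  · subst h; simpa
  · simp [h]

lemma act_ne (q) (v : Option Γ') (d : ℤ) : (act q v d).2.1 ≠ 0 := by
  cases q <;> simp [act]

/-- The control state reached from `x` when the digit `d` is read; halted states stay put. -/
def srcSt (c : ToPartrec.Code) (x : locs c) (d : Fin 5) : locs c :=
  match x with
  | ⟨none, h⟩ => ⟨none, h⟩
  | ⟨some (q, v), h⟩ => ⟨(act q v d).2.2, act_mem c q v d (h _ rfl)⟩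

/-- The stack concerned at a given control state. -/
def mvStk : Loc → K'
  | none => .main
  | some (q, _) => stk q

/-- The offset `a` of the new value `a + b * u` of the stack concerned, if `d` is read. -/
def mvOff (d : ℤ) : Loc → ℤ
  | none => d
  | some (q, v) => (act q v d).1

/-- The factor `b` of the new value `a + b * u` of the stack concerned, if `d` is read. -/
def mvScal (d : ℤ) : Loc → ℤ
  | none => 5
  | some (q, v) => (act q v d).2.1

lemma mvScal_ne (d : ℤ) (x : Loc) : mvScal d x ≠ 0 := by
  rcases x with _ | ⟨q, v⟩
  · simp [mvScal]
  · exact act_ne q v d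

/-- The halting state. -/
def haltLoc (c : ToPartrec.Code) : locs c := ⟨none, fun _ h => by cases h⟩

/-- The affine system simulating the program `c`. Besides one move for each control state and digit
read, it has moves that increase the registers freely at the halting state, so that all halting
configurations are connected to the one with zero registers. -/
abbrev sysOf (c : ToPartrec.Code) : Sys :=
  { J := K'
    St := locs c
    I := (locs c × Fin 5) ⊕ K'
    s := Sum.elim (fun p => p.1) (fun _ => haltLoc c)
    s' := Sum.elim (fun p => srcSt c p.1 p.2) (fun _ => haltLoc c)
    a := Sum.elim (fun p => Pi.single (mvStk p.1) ((p.2 : ℕ) : ℤ)) (fun _ => 0)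
    a' := Sum.elim (fun p => Pi.single (mvStk p.1) (mvOff ((p.2 : ℕ) : ℤ) p.1))
      (fun k => Pi.single k 1)
    M := Sum.elim (fun p => scal (mvStk p.1) 5) (fun _ => 1)
    M' := Sum.elim (fun p => scal (mvStk p.1) (mvScal ((p.2 : ℕ) : ℤ) p.1)) (fun _ => 1)
    hM := by
      rintro (⟨p, d⟩ | k) j
      · exact scal_ne _ _ (by norm_num) j
      · simp
    hM' := by
      rintro (⟨p, d⟩ | k) j
      · exact scal_ne _ _ (mvScal_ne _ _) j
      · simp }

lemma single_scal (k : K') (c b : ℤ) (u : K' → ℤ) :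
    Pi.single k c + scal k b * u = Function.update u k (c + b * u k) := by
  funext j
  by_cases h : j = k
  · subst h; simp [scal]
  · simp [scal, h]

lemma sysOf_move (c : ToPartrec.Code) (p q : locs c × (K' → ℤ)) : (sysOf c).Move p q ↔
    (∃ (x : locs c) (d : Fin 5) (u : K' → ℤ),
      p = (x, Function.update u (mvStk x.1) (((d : ℕ) : ℤ) + 5 * u (mvStk x.1))) ∧
      q = (srcSt c x d, Function.update u (mvStk x.1)
        (mvOff ((d : ℕ) : ℤ) x.1 + mvScal ((d : ℕ) : ℤ) x.1 * u (mvStk x.1)))) ∨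
    ∃ (k : K') (u : K' → ℤ), p = (haltLoc c, u) ∧ q = (haltLoc c, Pi.single k 1 + u) := by
  constructor
  · rintro ⟨⟨x, d⟩ | k, u, h1, h2⟩
    · refine Or.inl ⟨x, d, u, h1.trans ?_, h2.trans ?_⟩
      · exact Prod.ext rfl (single_scal _ _ _ _)
      · exact Prod.ext rfl (single_scal _ _ _ _)
    · refine Or.inr ⟨k, u, h1.trans ?_, h2.trans ?_⟩
      · refine Prod.ext rfl ?_
        show (0 : K' → ℤ) + 1 * u = u
        simp
      · refine Prod.ext rfl ?_
        show (Pi.single k 1 : K' → ℤ) + 1 * u = Pi.single k 1 + u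
        simp
  · rintro (⟨x, d, u, rfl, rfl⟩ | ⟨k, u, rfl, rfl⟩)
    · exact ⟨Sum.inl (x, d), u, Prod.ext rfl (single_scal _ _ _ _).symm,
        Prod.ext rfl (single_scal _ _ _ _).symm⟩
    · refine ⟨Sum.inr k, u, Prod.ext rfl ?_, Prod.ext rfl ?_⟩
      · show u = (0 : K' → ℤ) + 1 * u
        simp
      · show Pi.single k 1 + u = (Pi.single k 1 : K' → ℤ) + 1 * u
        simp

lemma move_of_step (c : ToPartrec.Code) (x : locs c) (α : K' → ℤ) (p : Loc × (K' → ℤ))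
    (h : p ∈ step5 (x.1, α)) : ∃ y : locs c, y.1 = p.1 ∧ (sysOf c).Move (x, α) (y, p.2) := by
  obtain ⟨_ | ⟨q, v⟩, hx⟩ := x
  · cases h
  · simp only [step5, Option.mem_def, Option.some.injEq] at h
    subst h
    refine ⟨⟨_, act_mem c q v _ (hx _ rfl)⟩, rfl, (sysOf_move c _ _).2 (Or.inl ?_)⟩
    have h5 : (α (stk q) % 5).toNat < 5 := by omega
    have h6 : ((α (stk q) % 5).toNat : ℤ) = α (stk q) % 5 := by omega
    refine ⟨⟨some (q, v), hx⟩, ⟨_, h5⟩,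
      Function.update α (stk q) (α (stk q) / 5), Prod.ext rfl ?_, Prod.ext ?_ ?_⟩
    · simp [mvStk, h6, Int.emod_add_mul_ediv]
    · simp only [srcSt, h6]
    · simp [mvStk, h6, mvOff, mvScal]

/-- Halting is invariant under the moves of the system, also for registers that encode no stacks,
because the simulated machine is deterministic. -/
lemma dom_of_move (c : ToPartrec.Code) (x y : locs c) (α β : K' → ℤ)
    (h : (sysOf c).Move (x, α) (y, β)) :
    (StateTransition.eval step5 (x.1, α)).Dom ↔ (StateTransition.eval step5 (y.1, β)).Dom := by
  have hn : ∀ β, (StateTransition.eval step5 (none, β)).Dom := fun β => by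
    rw [Part.dom_iff_mem]
    exact ⟨_, mem_eval.2 ⟨Relation.ReflTransGen.refl, rfl⟩⟩
  rcases (sysOf_move c _ _).1 h with ⟨⟨_ | ⟨q, v⟩, hx⟩, d, u, h1, h2⟩ | ⟨k, u, h1, h2⟩
  · simp only [srcSt, Prod.ext_iff] at h1 h2
    rw [h1.1, h2.1]
    simp only [hn]
  · simp only [srcSt, Prod.ext_iff, mvStk, mvOff, mvScal] at h1 h2
    rw [h1.1, h2.1]
    have hd : (d : ℕ) < 5 := d.2
    have key : (((act q v d).2.2, β) : Loc × (K' → ℤ)) ∈ step5 (some (q, v), α) := by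
      have e1 : α (stk q) % 5 = (d : ℕ) := by rw [h1.2]; simp; omega
      have e2 : α (stk q) / 5 = u (stk q) := by rw [h1.2]; simp; omega
      simp only [step5, Option.mem_def, e1, e2]
      rw [h1.2, h2.2]
      simp
    rw [reaches_eval (Relation.ReflTransGen.single key)]
  · simp only [Prod.ext_iff] at h1 h2
    rw [h1.1, h2.1]
    simp only [haltLoc, hn]

lemma halt_conn (c : ToPartrec.Code) (β : K' → ℤ) :
    (sysOf c).Conn (haltLoc c, β) (haltLoc c, 0) := by
  have h1 : ∀ (β : K' → ℤ) k,
      (sysOf c).Conn (haltLoc c, β) (haltLoc c, (Pi.single k 1 + β : K' → ℤ)) := by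
    intro β k
    exact Relation.EqvGen.rel _ _ ((sysOf_move c _ _).2 (Or.inr ⟨k, β, rfl, rfl⟩))
  have h2 : ∀ (k : K') (n : ℤ) (β : K' → ℤ),
      (sysOf c).Conn (haltLoc c, β) (haltLoc c, (Pi.single k n + β : K' → ℤ)) := by
    intro k n
    induction n using Int.induction_on with
    | zero => intro β; rw [Pi.single_zero, zero_add]; exact Relation.EqvGen.refl _
    | succ i ih =>
      intro β
      refine (ih β).trans _ _ _ ?_
      have := h1 (Pi.single k (i : ℤ) + β) k
      rwa [← add_assoc, ← Pi.single_add, add_comm 1] at this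
    | pred i ih =>
      intro β
      refine (ih β).trans _ _ _ ?_
      have := h1 (Pi.single k (-i - 1 : ℤ) + β) k
      rw [← add_assoc, ← Pi.single_add, add_sub_cancel] at this
      exact this.symm
  have h3 : ∀ (t : Finset K'), (sysOf c).Conn (haltLoc c, 0)
      (haltLoc c, (∑ k ∈ t, Pi.single k (β k) : K' → ℤ)) := by
    intro t
    induction t using Finset.induction_on with
    | empty => rw [Finset.sum_empty]; exact Relation.EqvGen.refl _
    | insert k t hk ih =>
      rw [Finset.sum_insert hk]
      exact ih.trans _ _ _ (h2 _ _ _)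
  have := Fintype.ofFinite K'
  have := h3 Finset.univ
  rw [Finset.univ_sum_single] at this
  exact this.symm

lemma sysOf_spec (c : ToPartrec.Code) (x : locs c) (α : K' → ℤ) :
    (sysOf c).Conn (x, α) (haltLoc c, 0) ↔ (StateTransition.eval step5 (x.1, α)).Dom := by
  constructor
  · intro h
    have : ∀ p q : locs c × (K' → ℤ), (sysOf c).Conn p q →
        ((StateTransition.eval step5 (p.1.1, p.2)).Dom ↔
          (StateTransition.eval step5 (q.1.1, q.2)).Dom) := by
      intro p q h
      induction h with
      | rel p q h => exact dom_of_move c _ _ _ _ h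
      | refl p => rfl
      | symm p q _ ih => exact ih.symm
      | trans p q r _ _ ih₁ ih₂ => exact ih₁.trans ih₂
    rw [this _ _ h, Part.dom_iff_mem]
    exact ⟨_, mem_eval.2 ⟨Relation.ReflTransGen.refl, rfl⟩⟩
  · intro h
    rw [Part.dom_iff_mem] at h
    obtain ⟨⟨l, β⟩, h⟩ := h
    obtain ⟨h1, h2⟩ := mem_eval.1 h
    have : ∀ p, Reaches step5 (x.1, α) p →
        ∃ y : locs c, y.1 = p.1 ∧ (sysOf c).Conn (x, α) (y, p.2) := by
      intro p hp
      induction hp with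
      | refl => exact ⟨x, rfl, Relation.EqvGen.refl _⟩
      | @tail p q _ hpq ih =>
        obtain ⟨y, hy, hc⟩ := ih
        obtain ⟨z, hz, hm⟩ := move_of_step c y p.2 q (by rw [hy]; exact hpq)
        exact ⟨z, hz, hc.trans _ _ _ (Relation.EqvGen.rel _ _ hm)⟩
    obtain ⟨y, hy, hc⟩ := this _ h1
    refine hc.trans _ _ _ ?_
    have : y = haltLoc c := by
      apply Subtype.ext
      rw [hy]
      rcases l with _ | ⟨q, v⟩
      · rfl
      · cases h2
    rw [this]
    exact halt_conn c β

/-- The contents of the main stack on input `[m]`, as a number. -/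
def inp (m : ℕ) : ℕ := (enc (trList [m])).toNat

lemma enc_nonneg (l : List Γ') : 0 ≤ enc l := by
  induction l with
  | nil => simp [enc]
  | cons a l ih => cases a <;> simp only [enc, dig] <;> omega

lemma inp_cast (m : ℕ) : (inp m : ℤ) = enc (trList [m]) := Int.toNat_of_nonneg (enc_nonneg _)

lemma trNat_bit0 (k : ℕ) (hk : 0 < k) : trNat (2 * k) = .bit0 :: trNat k := by
  unfold trNat
  have : ((2 * k : ℕ) : Num) = Num.bit0 (k : Num) := by
    rw [two_mul, Nat.cast_add, Num.bit0_of_bit0]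
  rw [this]
  cases h : (k : Num) with
  | zero =>
    have := congrArg (fun x : Num => (x : ℕ)) h
    simp at this
    omega
  | pos n => rfl

lemma trNat_bit1 (k : ℕ) : trNat (2 * k + 1) = .bit1 :: trNat k := by
  unfold trNat
  have : ((2 * k + 1 : ℕ) : Num) = Num.bit1 (k : Num) := by
    rw [two_mul, Nat.cast_add, Nat.cast_add, Nat.cast_one, Num.bit1_of_bit1]
  rw [this]
  cases h : (k : Num) <;> rfl

/-- The digits of the input are those of the binary expansion, so that `inp` can be computed by
recursion on `m / 2`. -/
lemma inp_rec (m : ℕ) : inp m = if m = 0 then 3 else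
    if m % 2 = 0 then 1 + 5 * inp (m / 2) else 2 + 5 * inp (m / 2) := by
  split_ifs with h0 h1 <;> zify
  · subst h0; simp [inp_cast, enc, dig]
  · obtain ⟨k, rfl⟩ : ∃ k, m = 2 * k := ⟨m / 2, by omega⟩
    rw [inp_cast, inp_cast, trList, trNat_bit0 k (by omega)]
    simp [enc, dig]
  · obtain ⟨k, rfl⟩ : ∃ k, m = 2 * k + 1 := ⟨m / 2, by omega⟩
    rw [inp_cast, inp_cast, trList, trNat_bit1 k]
    have : (2 * k + 1) / 2 = k := by omega
    simp [enc, dig, this]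

lemma inp_primrec : Primrec inp := by
  have h : Primrec₂ (fun (_ : Unit) (m : ℕ) => inp m) := by
    refine Primrec.nat_strong_rec _ (g := fun _ l =>
      if l.length = 0 then some 3 else
        if l.length % 2 = 0 then (l[l.length / 2]?).map (fun x => 1 + 5 * x)
        else (l[l.length / 2]?).map (fun x => 2 + 5 * x)) ?_ ?_
    · have hl : Primrec (fun p : Unit × List ℕ => p.2.length) :=
        Primrec.list_length.comp Primrec.snd
      have hg : Primrec (fun p : Unit × List ℕ => p.2[p.2.length / 2]?) :=
        Primrec.list_getElem?.comp Primrec.snd (Primrec.nat_div.comp hl (Primrec.const 2))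
      refine Primrec.ite (Primrec.eq.comp hl (Primrec.const 0)) (Primrec.const _) ?_
      refine Primrec.ite (Primrec.eq.comp (Primrec.nat_mod.comp hl (Primrec.const 2))
        (Primrec.const 0)) ?_ ?_
      · exact Primrec.option_map hg (Primrec.nat_add.comp (Primrec.const 1)
          (Primrec.nat_mul.comp (Primrec.const 5) Primrec.snd)).to₂
      · exact Primrec.option_map hg (Primrec.nat_add.comp (Primrec.const 2)
          (Primrec.nat_mul.comp (Primrec.const 5) Primrec.snd)).to₂
    · intro _ m
      rw [inp_rec m]
      simp only [List.length_map, List.length_range]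
      by_cases h0 : m = 0
      · simp [h0]
      · have : (List.map inp (List.range m))[m / 2]? = some (inp (m / 2)) := by
          rw [List.getElem?_map, List.getElem?_range (by omega)]; rfl
        simp only [this, Option.map_some, h0, if_false]
        split_ifs <;> rfl
  exact h.comp (Primrec.const ()) Primrec.id

/-- A fixed affine system whose connectivity problem is the halting problem. -/
theorem machine : ∃ (T : Sys) (s₀ h : T.St) (j₀ : T.J) (n : ℕ → ℕ), Primrec n ∧
    ∀ m : ℕ, T.Conn (s₀, fun j => open Classical in if j = j₀ then (n m : ℤ) else 0) (h, 0) ↔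
      (Nat.Partrec.Code.eval (Denumerable.ofNat Nat.Partrec.Code m) 0).Dom := by
  have hp : Nat.Partrec' (n := 1) fun v =>
      Nat.Partrec.Code.eval (Denumerable.ofNat Nat.Partrec.Code v.head) 0 := by
    apply Nat.Partrec'.of_part
    exact Nat.Partrec.Code.eval_part.comp
      ((Computable.ofNat Nat.Partrec.Code).comp Computable.vector_head) (Computable.const 0)
  obtain ⟨c, hc⟩ := ToPartrec.Code.exists_code hp
  have hs : (some (tr (trNormal c .halt), none) : Loc) ∈ locs c := by
    rintro _ ⟨⟩
    have := (tr_supports c .halt).1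
    simp only [TM2.stmts, Finset.mem_insertNone, Finset.mem_biUnion]
    rintro _ ⟨⟩
    exact ⟨_, this, TM2.stmts₁_self⟩
  refine ⟨sysOf c, ⟨_, hs⟩, haltLoc c, K'.main, inp, inp_primrec, fun m => ?_⟩
  have e1 : (fun j : K' => open Classical in if j = K'.main then (inp m : ℤ) else 0) =
      (trC (init c [m])).2 := by
    funext j
    cases j <;> simp [trC, init, inp_cast, K'.elim, enc]
  refine (sysOf_spec c ⟨_, hs⟩ _).trans ?_
  have e2 := step5_dom (init c [m])
  rw [PartrecToTM2.tr_eval] at e2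
  have e3 := hc (⟨[m], rfl⟩ : List.Vector ℕ 1)
  simp only at e3
  rw [e3] at e2
  have : trC (init c [m]) = (some (tr (trNormal c .halt), none),
    (fun j : K' => open Classical in if j = K'.main then (inp m : ℤ) else 0)) :=
    Prod.ext rfl e1.symm
  rw [this] at e2
  refine Iff.trans ?_ (e2.trans Iff.rfl)
  refine Eq.to_iff (congrArg (fun p => (StateTransition.eval step5 p).Dom)
    (Prod.ext rfl (funext fun j => ?_)))
  by_cases h : j = K'.main <;> simp [h]
end Machine
end CommSolv

namespace CommSolv
open scoped commutatorElement
/-! ### Groups with prescribed commutation, and the base group -/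

section Raag
variable {α β α' β' α'' β'' : Type}

/-- The commutators `[a, b]`, `(a, b) ∈ R`, in the free group on `α ⊕ β`. -/
def raagRels (R : Set (α × β)) : Set (FreeGroup (α ⊕ β)) :=
  {g | ∃ p ∈ R, g = ⁅(FreeGroup.of (Sum.inl p.1) : FreeGroup (α ⊕ β)),
    (FreeGroup.of (Sum.inr p.2) : FreeGroup (α ⊕ β))⁆}

/-- The right-angled Artin group of the bipartite graph `R` between `α` and `β`. -/
abbrev Raag (R : Set (α × β)) : Type := PresentedGroup (raagRels R)

/-- The generator of `Raag R` given by `a : α`. -/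
def Raag.l (R : Set (α × β)) (a : α) : Raag R := PresentedGroup.of (Sum.inl a)

/-- The generator of `Raag R` given by `b : β`. -/
def Raag.r (R : Set (α × β)) (b : β) : Raag R := PresentedGroup.of (Sum.inr b)

lemma Raag.comm (R : Set (α × β)) {a : α} {b : β} (h : (a, b) ∈ R) :
    Commute (Raag.l R a) (Raag.r R b) := by
  have : (QuotientGroup.mk ⁅(FreeGroup.of (Sum.inl a) : FreeGroup (α ⊕ β)),
      (FreeGroup.of (Sum.inr b) : FreeGroup (α ⊕ β))⁆ : Raag R) = 1 :=
    PresentedGroup.one_of_mem ⟨(a, b), h, rfl⟩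
  exact commutatorElement_eq_one_iff_commute.1 this

/-- The universal property of `Raag R`. -/
def Raag.lift {G : Type} [Group G] (R : Set (α × β)) (f : α → G) (g : β → G)
    (h : ∀ a b, (a, b) ∈ R → Commute (f a) (g b)) : Raag R →* G :=
  PresentedGroup.toGroup (f := Sum.elim f g) (by
    rintro _ ⟨⟨a, b⟩, hp, rfl⟩
    simpa [map_commutatorElement] using commutatorElement_eq_one_iff_commute.2 (h a b hp))

@[simp] lemma Raag.lift_l {G : Type} [Group G] (R : Set (α × β)) (f : α → G) (g : β → G) (h)
    (a : α) : Raag.lift R f g h (Raag.l R a) = f a := by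
  simp [Raag.lift, Raag.l]

@[simp] lemma Raag.lift_r {G : Type} [Group G] (R : Set (α × β)) (f : α → G) (g : β → G) (h)
    (b : β) : Raag.lift R f g h (Raag.r R b) = g b := by
  simp [Raag.lift, Raag.r]

lemma Raag.hom_ext {G : Type} [Group G] {R : Set (α × β)} {f g : Raag R →* G}
    (h₁ : ∀ a, f (Raag.l R a) = g (Raag.l R a)) (h₂ : ∀ b, f (Raag.r R b) = g (Raag.r R b)) :
    f = g := by
  apply PresentedGroup.ext
  rintro (a | b)
  exacts [h₁ a, h₂ b]

/-- The homomorphism induced by a morphism of bipartite graphs. -/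
def Raag.map {R : Set (α × β)} {R' : Set (α' × β')} (p : α → α') (q : β → β')
    (h : ∀ a b, (a, b) ∈ R → (p a, q b) ∈ R') : Raag R →* Raag R' :=
  Raag.lift R (fun a => Raag.l R' (p a)) (fun b => Raag.r R' (q b))
    fun a b hab => Raag.comm R' (h a b hab)

/-- The inclusion of a full subgraph induces an injection, since killing the other generators
gives a retraction. -/
lemma Raag.map_injective {R : Set (α × β)} {R' : Set (α' × β')} (p : α → α') (q : β → β')
    (h : ∀ a b, (a, b) ∈ R → (p a, q b) ∈ R') (h' : ∀ a b, (p a, q b) ∈ R' → (a, b) ∈ R)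
    (hp : p.Injective) (hq : q.Injective) : Function.Injective (Raag.map p q h) := by
  classical
  let f : α' → Raag R := fun a' => if ha : ∃ a, p a = a' then Raag.l R ha.choose else 1
  let g : β' → Raag R := fun b' => if hb : ∃ b, q b = b' then Raag.r R hb.choose else 1
  have hf : ∀ a, f (p a) = Raag.l R a := fun a => by
    have ha : ∃ a₁, p a₁ = p a := ⟨a, rfl⟩
    simp only [f, dif_pos ha]
    rw [hp ha.choose_spec]
  have hg : ∀ b, g (q b) = Raag.r R b := fun b => by
    have hb : ∃ b₁, q b₁ = q b := ⟨b, rfl⟩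
    simp only [g, dif_pos hb]
    rw [hq hb.choose_spec]
  let ρ : Raag R' →* Raag R := Raag.lift R' f g (by
    intro a' b' hab
    by_cases ha : ∃ a, p a = a'
    · by_cases hb : ∃ b, q b = b'
      · obtain ⟨a, rfl⟩ := ha
        obtain ⟨b, rfl⟩ := hb
        rw [hf, hg]
        exact Raag.comm R (h' a b hab)
      · simp [g, dif_neg hb]
    · simp [f, dif_neg ha])
  have : ρ.comp (Raag.map p q h) = MonoidHom.id _ := by
    apply Raag.hom_ext
    · intro a; simp [Raag.map, ρ, hf]
    · intro b; simp [Raag.map, ρ, hg]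
  exact Function.LeftInverse.injective (g := ρ) fun x => DFunLike.congr_fun this x

variable {S A : Type} [AddCommGroup A]

/-- The graph on `(S × A) ⊔ A` in which `(s, β)` and `γ` are joined if `(s, β - γ) ∈ E`. -/
def graphOf (E : Set (S × A)) : Set ((S × A) × A) := {p | (p.1.1, p.1.2 - p.2) ∈ E}

/-- Translation by `u` on the group of `graphOf E`. -/
def shiftHom (E : Set (S × A)) (u : A) : Raag (graphOf E) →* Raag (graphOf E) :=
  Raag.map (fun p => (p.1, p.2 + u)) (fun c => c + u) fun a b h => by
    simpa [graphOf] using h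

@[simp] lemma shiftHom_l (E : Set (S × A)) (u : A) (p : S × A) :
    shiftHom E u (Raag.l _ p) = Raag.l _ (p.1, p.2 + u) := by simp [shiftHom, Raag.map]
@[simp] lemma shiftHom_r (E : Set (S × A)) (u : A) (p : A) :
    shiftHom E u (Raag.r _ p) = Raag.r _ (p + u) := by simp [shiftHom, Raag.map]

lemma shiftHom_add (E : Set (S × A)) (u v : A) :
    shiftHom E (u + v) = (shiftHom E u).comp (shiftHom E v) := by
  apply Raag.hom_ext
  · intro a; simp [add_assoc, add_comm v u]
  · intro a; simp [add_assoc, add_comm v u]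

lemma shiftHom_zero (E : Set (S × A)) : shiftHom E 0 = MonoidHom.id _ := by
  apply Raag.hom_ext <;> simp

/-- The translation action of `A` on the group of `graphOf E`. -/
def shift (E : Set (S × A)) : Multiplicative A →* MulAut (Raag (graphOf E)) where
  toFun u := MonoidHom.toMulEquiv (shiftHom E u.toAdd) (shiftHom E (-u.toAdd))
    (by rw [← shiftHom_add]; simp [shiftHom_zero]) (by rw [← shiftHom_add]; simp [shiftHom_zero])
  map_one' := by
    ext x
    exact DFunLike.congr_fun (shiftHom_zero E) x
  map_mul' u v := by
    ext x
    exact DFunLike.congr_fun (shiftHom_add E u.toAdd v.toAdd) x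

lemma shift_apply (E : Set (S × A)) (u : Multiplicative A) (x : Raag (graphOf E)) :
    shift E u x = shiftHom E u.toAdd x := rfl

/-- The group generated by `A`, letters `t_s` and a letter `k` in which the conjugate of `t_s`
by `β` commutes with `k` exactly for `(s, β) ∈ E`. -/
abbrev Base (E : Set (S × A)) : Type := Raag (graphOf E) ⋊[shift E] Multiplicative A

/-- An affine pullback of `E` gives a subgroup of `Base E`. -/
lemma base_embed (E : Set (S × A)) (F : Set (Unit × A)) (s : S) (a : A) (M : A →+ A)
    (hM : Function.Injective M) (hF : ∀ u, ((), u) ∈ F ↔ (s, a + M u) ∈ E) :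
    ∃ f : Base F →* Base E, Function.Injective f ∧
      (∀ u, f (SemidirectProduct.inr (.ofAdd u)) = SemidirectProduct.inr (.ofAdd (M u))) ∧
      f (SemidirectProduct.inl (Raag.l _ ((), 0))) = SemidirectProduct.inl (Raag.l _ (s, a)) ∧
      f (SemidirectProduct.inl (Raag.r _ 0)) = SemidirectProduct.inl (Raag.r _ 0) := by
  have key : ∀ (p : Unit × A) (b : A), (p, b) ∈ graphOf F ↔ ((s, a + M p.2), M b) ∈ graphOf E := by
    intro p b
    simp only [graphOf, Set.mem_ofPred_eq]
    rw [show ((p.1, p.2 - b) : Unit × A) = ((), p.2 - b) from rfl, hF]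
    simp [add_sub_assoc]
  let f₁ : Raag (graphOf F) →* Raag (graphOf E) :=
    Raag.map (fun p => (s, a + M p.2)) M fun p b => (key p b).1
  have hf₁ : Function.Injective f₁ := by
    apply Raag.map_injective
    · exact fun p b => (key p b).2
    · rintro ⟨⟨⟩, x⟩ ⟨⟨⟩, y⟩ h
      simp only [Prod.mk.injEq, add_right_inj, true_and] at h
      rw [hM h]
    · exact hM
  have hl : ∀ p, f₁ (Raag.l _ p) = Raag.l _ (s, a + M p.2) := fun p => by simp [f₁, Raag.map]
  have hr : ∀ b, f₁ (Raag.r _ b) = Raag.r _ (M b) := fun p => by simp [f₁, Raag.map]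
  let f := SemidirectProduct.map (φ₁ := shift F) (φ₂ := shift E) f₁ (AddMonoidHom.toMultiplicative M) (by
    intro u
    apply Raag.hom_ext
    · intro p
      simp [shift_apply, hl, add_assoc]
    · intro p
      simp [shift_apply, hr])
  refine ⟨f, ?_, ?_, ?_, ?_⟩
  · intro x y h
    apply SemidirectProduct.ext
    · exact hf₁ (congrArg SemidirectProduct.left h)
    · exact hM (congrArg SemidirectProduct.right h)
  · intro u; simp [f]
  · simp [f, hl]
  · simp [f, hr]

/-- If `(s, β) ∉ E` the commutator of `k` with the conjugate of `t_s` by `β` has infinite order: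
map the conjugate to a translation, `k` to a reflection, and all other generators to `1`. -/
lemma base_infinite (E : Set (S × A)) (s : S) (b : A) (h : (s, b) ∉ E) (n : ℤ)
    (hn : (⁅(SemidirectProduct.inl (Raag.r _ 0) : Base E),
      (SemidirectProduct.inl (Raag.l _ (s, b)) : Base E)⁆) ^ n = 1) : n = 0 := by
  classical
  rw [← map_commutatorElement, ← map_zpow] at hn
  have hn' := SemidirectProduct.inl_injective (hn.trans (map_one _).symm)
  let ρ : Raag (graphOf E) →* DihedralGroup 0 := Raag.lift _
    (fun p => if p = (s, b) then .r 1 else 1) (fun c => if c = 0 then .sr 0 else 1) (by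
      intro p c hpc
      by_cases hp : p = (s, b)
      · by_cases hc : c = 0
        · subst hp hc; simp [graphOf] at hpc; exact absurd hpc h
        · simp [hc]
      · simp [hp])
  have := congrArg ρ hn'
  have e : ρ (⁅Raag.r (graphOf E) 0, Raag.l (graphOf E) (s, b)⁆) = .r (-2) := by
    rw [map_commutatorElement]
    simp only [ρ, Raag.lift_l, Raag.lift_r, if_true, commutatorElement_def]
    rfl
  rw [map_zpow, e, map_one] at this
  simp only [DihedralGroup.r_zpow, DihedralGroup.one_def, DihedralGroup.r.injEq] at this
  have t2 : (-2 : ℤ) * n = 0 := by simpa using this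
  omega
end Raag

section Conj

/-- Higman, Neumann and Neumann: isomorphic subgroups become conjugate in a larger group. -/
lemma exists_conj {H Q : Type} [Group H] [Group Q] (f g : H →* Q) (hf : Function.Injective f)
    (hg : Function.Injective g) :
    ∃ (Q' : Type) (_ : Group Q') (e : Q →* Q') (r : Q'), Function.Injective e ∧
      ∀ h, r * e (f h) * r⁻¹ = e (g h) := by
  let φ : f.range ≃* g.range := (MonoidHom.ofInjective hf).symm.trans (MonoidHom.ofInjective hg)
  refine ⟨HNNExtension Q f.range g.range φ, inferInstance, HNNExtension.of, HNNExtension.t,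
    HNNExtension.of_injective φ, fun h => ?_⟩
  have := HNNExtension.equiv_eq_conj (φ := φ) (MonoidHom.ofInjective hf h)
  rw [MonoidHom.ofInjective_apply] at this
  rw [← this]
  simp [φ, MonoidHom.ofInjective_apply]

/-- Over a finite index set, extensions of a group that each provide a solution `b` of one
condition can be iterated to solve all the conditions, if these persist in larger groups. -/
lemma iterate {ι Q B : Type} [Finite ι] [Group Q]
    (P : ∀ (_ : ι) (Q' : Type) [Group Q'], (Q →* Q') → (B → Q') → Prop)
    (mono : ∀ i (Q₁ Q₂ : Type) [Group Q₁] [Group Q₂] (f : Q →* Q₁) (b : B → Q₁) (e : Q₁ →* Q₂),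
      P i Q₁ f b → P i Q₂ (e.comp f) (e ∘ b))
    (step : ∀ i (Q₁ : Type) [Group Q₁] (f : Q →* Q₁), Function.Injective f →
      ∃ (Q₂ : Type) (_ : Group Q₂) (e : Q₁ →* Q₂) (b : B → Q₂), Function.Injective e ∧
        P i Q₂ (e.comp f) b) :
    ∃ (Q' : Type) (_ : Group Q') (f : Q →* Q') (b : ι → B → Q'), Function.Injective f ∧
      ∀ i, P i Q' f (b i) := by
  classical
  have := Fintype.ofFinite ι
  suffices H : ∀ s : Finset ι, ∃ (Q' : Type) (_ : Group Q') (f : Q →* Q') (b : ι → B → Q'),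
      Function.Injective f ∧ ∀ i ∈ s, P i Q' f (b i) by
    obtain ⟨Q', hQ, f, b, hf, hb⟩ := H Finset.univ
    exact ⟨Q', hQ, f, b, hf, fun i => hb i (Finset.mem_univ i)⟩
  intro s
  induction s using Finset.induction_on with
  | empty => exact ⟨Q, inferInstance, MonoidHom.id Q, fun _ _ => 1, Function.injective_id, by simp⟩
  | insert i s hi ih =>
    obtain ⟨Q₁, _, f, b, hf, hb⟩ := ih
    obtain ⟨Q₂, _, e, c, he, hc⟩ := step i Q₁ f hf
    refine ⟨Q₂, inferInstance, e.comp f, fun j => if j = i then c else e ∘ b j, he.comp hf, ?_⟩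
    intro j hj
    by_cases hji : j = i
    · subst hji; simpa using hc
    · simp only [if_neg hji]
      exact mono j Q₁ Q₂ f (b j) e (hb j (Finset.mem_of_mem_insert_of_ne hj hji))
end Conj

section Model
open Multiplicative

lemma Sys.conn_move (T : Sys) {p q : T.St × (T.J → ℤ)} (h : T.Move p q) (e : T.St × (T.J → ℤ)) :
    T.Conn p e ↔ T.Conn q e :=
  ⟨fun H => .trans _ _ _ (.symm _ _ (.rel _ _ h)) H, fun H => .trans _ _ _ (.rel _ _ h) H⟩

attribute [instance] Sys.finJ Sys.finSt Sys.finI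

/-- If `(s₀, α)` is not connected to `(h, 0)`, the relations encoding the moves of `T`
together with `[k, t_h] = 1` do not force `k` to commute with `X(α) t_{s₀} X(α)⁻¹`. -/
theorem model (T : Sys) (s₀ h : T.St) (α : T.J → ℤ) (hc : ¬ T.Conn (s₀, α) (h, 0)) :
    ∃ (Q : Type) (_ : Group Q) (X : Multiplicative (T.J → ℤ) →* Q) (t : T.St → Q) (k : Q)
      (r : T.I → Q),
      (∀ i u, r i * X (ofAdd (T.M i * u)) * (r i)⁻¹ = X (ofAdd (T.M' i * u))) ∧
      (∀ i, r i * (X (ofAdd (T.a i)) * t (T.s i) * (X (ofAdd (T.a i)))⁻¹) * (r i)⁻¹ =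
        X (ofAdd (T.a' i)) * t (T.s' i) * (X (ofAdd (T.a' i)))⁻¹) ∧
      (∀ i, r i * k * (r i)⁻¹ = k) ∧ Commute k (t h) ∧
      ∀ n : ℤ, ⁅k, X (ofAdd α) * t s₀ * (X (ofAdd α))⁻¹⁆ ^ n = 1 → n = 0 := by
  let E : Set (T.St × (T.J → ℤ)) := {p | T.Conn p (h, 0)}
  let X₀ : Multiplicative (T.J → ℤ) →* Base E := SemidirectProduct.inr
  let t₀ : T.St → Base E := fun s => SemidirectProduct.inl (Raag.l _ (s, 0))
  let k₀ : Base E := SemidirectProduct.inl (Raag.r _ 0)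
  have conj : ∀ s u, X₀ (ofAdd u) * t₀ s * (X₀ (ofAdd u))⁻¹ =
      SemidirectProduct.inl (Raag.l _ (s, u)) := by
    intro s u
    have := (SemidirectProduct.inl_aut (φ := shift E) (ofAdd u) (Raag.l _ (s, 0)))
    simp only [X₀, t₀]
    rw [← map_inv, ← this]
    simp [shift_apply]
  let F : T.I → Set (Unit × (T.J → ℤ)) := fun i => {p | (T.s i, T.a i + T.M i * p.2) ∈ E}
  have inj : ∀ m : T.J → ℤ, (∀ j, m j ≠ 0) → Function.Injective (AddMonoidHom.mulLeft m) := by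
    intro m hm x y hxy
    funext j
    exact mul_left_cancel₀ (hm j) (congrFun hxy j)
  have h₁ := fun i => base_embed E (F i) (T.s i) (T.a i) (AddMonoidHom.mulLeft (T.M i))
    (inj _ (T.hM i)) fun u => Iff.rfl
  have h₂ := fun i => base_embed E (F i) (T.s' i) (T.a' i) (AddMonoidHom.mulLeft (T.M' i))
    (inj _ (T.hM' i)) fun u => T.conn_move ⟨i, u, rfl, rfl⟩ (h, 0)
  choose f f_inj f_x f_t f_k using h₁
  choose g g_inj g_x g_t g_k using h₂
  obtain ⟨Q, _, e, b, he, hb⟩ := iterate (ι := T.I) (Q := Base E) (B := Unit)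
    (fun i Q' _ e b => ∀ y, b () * e (f i y) * (b ())⁻¹ = e (g i y))
    (by
      intro i Q₁ Q₂ _ _ e b e' H y
      simpa using congrArg e' (H y))
    (by
      intro i Q₁ _ e he
      obtain ⟨Q₂, _, e', r, he', hr⟩ := exists_conj (e.comp (f i)) (e.comp (g i))
        (he.comp (f_inj i)) (he.comp (g_inj i))
      exact ⟨Q₂, inferInstance, e', fun _ => r, he', hr⟩)
  refine ⟨Q, inferInstance, e.comp X₀, fun s => e (t₀ s), e k₀, fun i => b i (), ?_, ?_, ?_, ?_, ?_⟩
  · intro i u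
    have := hb i (SemidirectProduct.inr (ofAdd u))
    rwa [f_x, g_x] at this
  · intro i
    have := hb i (SemidirectProduct.inl (Raag.l _ ((), 0)))
    rw [f_t, g_t, ← conj, ← conj] at this
    simpa using this
  · intro i
    have := hb i (SemidirectProduct.inl (Raag.r _ 0))
    rwa [f_k, g_k] at this
  · apply Commute.map
    have : Commute (Raag.l (graphOf E) (h, 0)) (Raag.r (graphOf E) 0) :=
      Raag.comm _ (show (h, (0 : T.J → ℤ) - 0) ∈ E by rw [sub_zero]; exact .refl _)
    exact (this.map SemidirectProduct.inl).symm
  · intro n hn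
    apply base_infinite E s₀ α hc n
    apply he
    rw [map_one, ← conj, ← hn]
    simp [X₀, t₀, k₀, map_commutatorElement]
end Model
end CommSolv

namespace CommSolv
open scoped commutatorElement
/-! ### Killing a group by killing one element -/

section Kill

/-- The commutator relations of the elementary `3 × 3` matrices. -/
structure Stein {G : Type} [Group G] (c : Fin 3 → Fin 3 → G) : Prop where
  diag : ∀ i, c i i = 1
  comm : ∀ i j k, i ≠ j → i ≠ k → k ≠ j → c i j = ⁅c i k, c k j⁆

lemma Stein.map {G H : Type} [Group G] [Group H] {c : Fin 3 → Fin 3 → G} (h : Stein c)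
    (f : G →* H) : Stein fun i j => f (c i j) where
  diag i := by rw [h.diag, map_one]
  comm i j k h₁ h₂ h₃ := by rw [h.comm i j k h₁ h₂ h₃, map_commutatorElement]

/-- A quotient of the group of elementary matrices in which `c 0 1` dies is trivial. -/
lemma Stein.kill {G : Type} [Group G] {c : Fin 3 → Fin 3 → G} (h : Stein c) (h1 : c 0 1 = 1)
    (i j : Fin 3) : c i j = 1 := by
  have e02 : c 0 2 = 1 := by rw [h.comm 0 2 1 (by decide) (by decide) (by decide), h1]; simp
  have e21 : c 2 1 = 1 := by rw [h.comm 2 1 0 (by decide) (by decide) (by decide), h1]; simp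
  have e20 : c 2 0 = 1 := by rw [h.comm 2 0 1 (by decide) (by decide) (by decide), e21]; simp
  have e12 : c 1 2 = 1 := by rw [h.comm 1 2 0 (by decide) (by decide) (by decide), e02]; simp
  have e10 : c 1 0 = 1 := by rw [h.comm 1 0 2 (by decide) (by decide) (by decide), e12]; simp
  have d := h.diag
  fin_cases i <;> fin_cases j <;> first | exact d _ | assumption

/-- The elementary matrices in `SL₃(ℤ)`. -/
def elem (i j : Fin 3) : Matrix.SpecialLinearGroup (Fin 3) ℤ :=
  if h : i = j then 1 else ⟨Matrix.transvection i j 1, Matrix.det_transvection_of_ne i j h 1⟩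

lemma stein_elem : Stein elem where
  diag i := by simp [elem]
  comm i j k h₁ h₂ h₃ := by
    rw [commutatorElement_def, eq_mul_inv_iff_mul_eq, eq_mul_inv_iff_mul_eq]
    apply Subtype.ext
    revert i j k
    decide

/-- The product of a power of `elem 0 1` and a power of `elem 0 2`. -/
def rowMat (p : ℤ × ℤ) : Matrix.SpecialLinearGroup (Fin 3) ℤ :=
  ⟨!![1, p.1, p.2; 0, 1, 0; 0, 0, 1], by simp [Matrix.det_fin_three]⟩

lemma rowMat_val (p : ℤ × ℤ) : (rowMat p).1 = !![1, p.1, p.2; 0, 1, 0; 0, 0, 1] := rfl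

/-- The homomorphism from the free abelian group of rank two onto the group generated by `elem 0 1`
and `elem 0 2`. -/
def row : Multiplicative (ℤ × ℤ) →* Matrix.SpecialLinearGroup (Fin 3) ℤ :=
  MonoidHom.mk' (fun p => rowMat p.toAdd) (by
    intro p q
    apply Subtype.ext
    rw [Matrix.SpecialLinearGroup.coe_mul]
    ext i j
    rw [Matrix.mul_apply, Fin.sum_univ_three, rowMat_val, rowMat_val, rowMat_val]
    fin_cases i <;> fin_cases j <;> simp [add_comm])

lemma row_val (p : Multiplicative (ℤ × ℤ)) :
    (row p).1 = !![1, p.toAdd.1, p.toAdd.2; 0, 1, 0; 0, 0, 1] := rfl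

lemma row_injective : Function.Injective row := by
  intro p q h
  have := congrArg Subtype.val h
  rw [row_val, row_val] at this
  exact Prod.ext (congrFun (congrFun this 0) 1) (congrFun (congrFun this 0) 2)

lemma row_one_zero : row (.ofAdd (1, 0)) = elem 0 1 := by
  apply Subtype.ext
  rw [row_val]
  decide

lemma row_zero_one : row (.ofAdd (0, 1)) = elem 0 2 := by
  apply Subtype.ext
  rw [row_val]
  decide

/-- A free abelian subgroup of rank two can be identified with the one of the first-row
elementary matrices, in a larger group. -/
lemma amalg {Q : Type} [Group Q] (u v : Q) (huv : Commute u v)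
    (hind : ∀ a b : ℤ, u ^ a * v ^ b = 1 → a = 0 ∧ b = 0) :
    ∃ (Q' : Type) (_ : Group Q') (e : Q →* Q') (c : Fin 3 → Fin 3 → Q'), Function.Injective e ∧
      Stein c ∧ c 0 1 = e u ∧ c 0 2 = e v := by
  let g : Multiplicative (ℤ × ℤ) →* Q := MonoidHom.mk' (fun p => u ^ p.toAdd.1 * v ^ p.toAdd.2) (by
    intro p q
    simp only [toAdd_mul, Prod.fst_add, Prod.snd_add, zpow_add]
    have := ((huv.zpow_right p.toAdd.2).zpow_left q.toAdd.1)
    simp only [mul_assoc]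
    rw [← mul_assoc (u ^ q.toAdd.1) (v ^ p.toAdd.2), this.eq, mul_assoc])
  have hg : Function.Injective g := by
    rw [injective_iff_map_eq_one]
    intro p hp
    obtain ⟨h1, h2⟩ := hind _ _ hp
    exact Prod.ext h1 h2
  obtain ⟨Q', _, e, r, he, hr⟩ := exists_conj ((MonoidHom.inr Q (Matrix.SpecialLinearGroup (Fin 3) ℤ)).comp row)
    ((MonoidHom.inl Q (Matrix.SpecialLinearGroup (Fin 3) ℤ)).comp g)
    ((Prod.mk_right_injective (1 : Q)).comp row_injective)
    ((Prod.mk_left_injective (1 : Matrix.SpecialLinearGroup (Fin 3) ℤ)).comp hg)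
  refine ⟨Q', inferInstance, e.comp (MonoidHom.inl Q (Matrix.SpecialLinearGroup (Fin 3) ℤ)),
    fun i j => (MulAut.conj r).toMonoidHom (e (MonoidHom.inr Q (Matrix.SpecialLinearGroup (Fin 3) ℤ) (elem i j))),
    he.comp (Prod.mk_left_injective (1 : Matrix.SpecialLinearGroup (Fin 3) ℤ)), ?_, ?_, ?_⟩
  · exact stein_elem.map ((MulAut.conj r).toMonoidHom.comp (e.comp (MonoidHom.inr Q (Matrix.SpecialLinearGroup (Fin 3) ℤ))))
  · have := hr (.ofAdd (1, 0))
    simp only [MonoidHom.comp_apply, row_one_zero] at this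
    simpa [g] using this
  · have := hr (.ofAdd (0, 1))
    simp only [MonoidHom.comp_apply, row_zero_one] at this
    simpa [g] using this

/-- The relations through which the death of `w` forces `z`, then `z'`, then each `y b`
to die. -/
structure Collapse {G Y : Type} [Group G] (w z z' : G) (y : Y → G)
    (c : Option (Option Y) → Fin 3 → Fin 3 → G) : Prop where
  stein : ∀ o, Stein (c o)
  c1 : c none 0 1 = w
  c2 : c none 0 2 = z
  c3 : ∀ o, c (some o) 0 1 = z
  c4 : c (some none) 0 2 = z'
  c5 : ∀ b, c (some (some b)) 0 2 = y b * z'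

lemma Collapse.kill {G Y : Type} [Group G] {w z z' : G} {y : Y → G}
    {c : Option (Option Y) → Fin 3 → Fin 3 → G} (h : Collapse w z z' y c) (hw : w = 1) :
    z = 1 ∧ z' = 1 ∧ (∀ b, y b = 1) ∧ ∀ o i j, c o i j = 1 := by
  have h0 := (h.stein none).kill (h.c1.trans hw)
  have hz : z = 1 := h.c2.symm.trans (h0 _ _)
  have h1 := fun o => (h.stein (some o)).kill ((h.c3 o).trans hz)
  have hz' : z' = 1 := h.c4.symm.trans (h1 _ _ _)
  refine ⟨hz, hz', fun b => ?_, ?_⟩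
  · simpa [hz'] using (h.c5 b).symm.trans (h1 _ _ _)
  · rintro (_ | o)
    exacts [h0, h1 o]

/-- If `w` has infinite order, the relations of `Collapse` can be realised without
affecting `w`. -/
theorem exists_collapse {Q Y : Type} [Group Q] [Finite Y] (w : Q)
    (hw : ∀ n : ℤ, w ^ n = 1 → n = 0) (y : Y → Q) :
    ∃ (Q' : Type) (_ : Group Q') (f : Q →* Q') (z z' : Q')
      (c : Option (Option Y) → Fin 3 → Fin 3 → Q'), Function.Injective f ∧
      Collapse (f w) z z' (fun b => f (y b)) c := by
  -- the two infinite cyclic factors carry the central elements `z` and `z'`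
  let z₀ : Q × Multiplicative ℤ × Multiplicative ℤ := (1, .ofAdd 1, 1)
  let z₁ : Q × Multiplicative ℤ × Multiplicative ℤ := (1, 1, .ofAdd 1)
  let p : Option (Option Y) → (Q × Multiplicative ℤ × Multiplicative ℤ) × (Q × Multiplicative ℤ × Multiplicative ℤ) := fun o => match o with
    | none => ((w, 1, 1), z₀)
    | some none => (z₀, z₁)
    | some (some b) => (z₀, (y b, 1, .ofAdd 1))
  have hcomm : ∀ o, Commute (p o).1 (p o).2 := by
    rintro (_ | _ | b) <;> simp [p, z₀, z₁, Commute, SemiconjBy, Prod.mk_mul_mk]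
  have hind : ∀ o (a b : ℤ), (p o).1 ^ a * (p o).2 ^ b = 1 → a = 0 ∧ b = 0 := by
    rintro (_ | _ | b') a b h <;>
    have h1 := congrArg (fun x => x.1) h <;>
    have h2 := congrArg (fun x => x.2.1) h <;>
    have h3 := congrArg (fun x => x.2.2) h <;>
    simp [p, z₀, z₁, ← ofAdd_zsmul] at h1 h2 h3
    · subst h2
      exact ⟨hw a (by simpa using h1), rfl⟩
    · exact ⟨h2, h3⟩
    · exact ⟨h2, h3⟩
  obtain ⟨Q', _, f, c, hf, hc⟩ := iterate (ι := Option (Option Y)) (Q := Q × Multiplicative ℤ × Multiplicative ℤ) (B := Fin 3 × Fin 3)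
    (fun o Q' _ f c => Stein (fun i j => c (i, j)) ∧ c (0, 1) = f (p o).1 ∧ c (0, 2) = f (p o).2)
    (by
      rintro o Q₁ Q₂ _ _ f c e ⟨h, h1, h2⟩
      exact ⟨h.map e, by simp [h1], by simp [h2]⟩)
    (by
      intro o Q₁ _ f hf
      obtain ⟨Q₂, _, e, c, he, hs, h1, h2⟩ := amalg (f (p o).1) (f (p o).2) ((hcomm o).map f)
        (fun a b h => hind o a b (hf (by simpa using h)))
      exact ⟨Q₂, inferInstance, e, fun q => c q.1 q.2, he, hs, h1, h2⟩)
  refine ⟨Q', inferInstance, f.comp (MonoidHom.inl Q (Multiplicative ℤ × Multiplicative ℤ)), f z₀, f z₁,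
    fun o i j => c o (i, j), hf.comp (Prod.mk_left_injective (1 : Multiplicative ℤ × Multiplicative ℤ)),
    fun o => (hc o).1, (hc none).2.1, (hc none).2.2, ?_, (hc (some none)).2.2, ?_⟩
  · rintro (_ | b)
    exacts [(hc (some none)).2.1, (hc (some (some b))).2.1]
  · intro b
    rw [(hc (some (some b))).2.2]
    simp [p, z₁, ← map_mul, Prod.mk_mul_mk]
end Kill
end CommSolv

namespace CommSolv
open scoped commutatorElement
open Multiplicative
/-! ### The presentation attached to a system -/

section Pres

/-- The letters of the machine group: registers `x`, states `t`, moves `r`, and `k`. -/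
inductive Bas (T : Sys) : Type
  | x (j : T.J)
  | t (s : T.St)
  | r (i : T.I)
  | k

/-- The letters of the collapsing group: those of the machine group, two letters `z`, `z'`, and
families `c o` of elementary matrices. -/
inductive Gen (T : Sys) : Type
  | b (y : Bas T)
  | z
  | z'
  | c (o : Option (Option (Bas T))) (i j : Fin 3)

instance (T : Sys) : Finite (Bas T) := by
  let f : T.J ⊕ T.St ⊕ T.I ⊕ Unit → Bas T :=
    Sum.elim .x (Sum.elim .t (Sum.elim .r fun _ => .k))
  refine Finite.of_surjective f ?_
  rintro (j | s | i | _)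
  exacts [⟨.inl j, rfl⟩, ⟨.inr (.inl s), rfl⟩, ⟨.inr (.inr (.inl i)), rfl⟩,
    ⟨.inr (.inr (.inr ())), rfl⟩]

instance (T : Sys) : Finite (Gen T) := by
  let f : Bas T ⊕ Bool ⊕ (Option (Option (Bas T)) × Fin 3 × Fin 3) → Gen T :=
    Sum.elim .b (Sum.elim (fun b => bif b then .z else .z') fun p => .c p.1 p.2.1 p.2.2)
  refine Finite.of_surjective f ?_
  rintro (y | _ | _ | ⟨o, i, j⟩)
  exacts [⟨.inl y, rfl⟩, ⟨.inr (.inl true), rfl⟩, ⟨.inr (.inl false), rfl⟩,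
    ⟨.inr (.inr (o, i, j)), rfl⟩]

/-- The monomial `∏ x_j ^ α_j`, the factors being taken in an arbitrary fixed order. -/
noncomputable def monom {J P : Type} [Finite J] [Group P] (x : J → P) (α : J → ℤ) : P :=
  letI := Fintype.ofFinite J
  (Finset.univ.toList.map fun j => x j ^ α j).prod

lemma map_monom {J P P' : Type} [Finite J] [Group P] [Group P'] (f : P →* P') (x : J → P)
    (α : J → ℤ) : f (monom x α) = monom (fun j => f (x j)) α := by
  simp [monom, map_list_prod, Function.comp_def]

lemma monom_eq {J P : Type} [Finite J] [DecidableEq J] [Group P] (x : J → P)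
    (X : Multiplicative (J → ℤ) →* P)
    (hX : ∀ j (n : ℤ), X (ofAdd (Pi.single j n)) = x j ^ n) (α : J → ℤ) :
    monom x α = X (ofAdd α) := by
  let _ := Fintype.ofFinite J
  have : ofAdd α = (Finset.univ.toList.map fun j => ofAdd (Pi.single j (α j) : J → ℤ)).prod := by
    rw [Finset.prod_map_toList, ← ofAdd_sum, Finset.univ_sum_single]
  rw [this, map_list_prod]
  simp [monom, Function.comp_def, hX]

lemma exists_hom {J P : Type} [Finite J] [DecidableEq J] [Group P] (x : J → P)
    (hx : ∀ i j, Commute (x i) (x j)) :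
    ∃ X : Multiplicative (J → ℤ) →* P, ∀ j (n : ℤ), X (ofAdd (Pi.single j n)) = x j ^ n := by
  let _ := Fintype.ofFinite J
  let X₁ : (J → Multiplicative ℤ) →* P := MonoidHom.noncommPiCoprod (fun j => zpowersHom P (x j))
    fun i j _ a b => ((hx i j).zpow_left _).zpow_right _
  refine ⟨X₁.comp (MulEquiv.piMultiplicative fun _ : J => ℤ).toMonoidHom, fun j n => ?_⟩
  have : (MulEquiv.piMultiplicative fun _ : J => ℤ) (ofAdd (Pi.single j n : J → ℤ)) =
      Pi.mulSingle j (ofAdd n) := by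
    funext i
    by_cases h : i = j
    · subst h; simp [MulEquiv.piMultiplicative]
    · simp [MulEquiv.piMultiplicative, h]
  change X₁ ((MulEquiv.piMultiplicative fun _ : J => ℤ) (ofAdd (Pi.single j n : J → ℤ))) = _
  rw [this]
  exact MonoidHom.noncommPiCoprod_mulSingle _ _ _

variable (T : Sys)

/-- The relations of the machine group and of the collapse, for a valuation `φ` of the letters;
the relation between `w` and the letter `c none 0 1` is not among them. -/
structure Good {P : Type} [Group P] (h : T.St) (φ : Gen T → P) : Prop where
  xx : ∀ i j, Commute (φ (.b (.x i))) (φ (.b (.x j)))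
  rx : ∀ i j, φ (.b (.r i)) * φ (.b (.x j)) ^ T.M i j * (φ (.b (.r i)))⁻¹ =
    φ (.b (.x j)) ^ T.M' i j
  rt : ∀ i, φ (.b (.r i)) * (monom (fun j => φ (.b (.x j))) (T.a i) * φ (.b (.t (T.s i))) *
      (monom (fun j => φ (.b (.x j))) (T.a i))⁻¹) * (φ (.b (.r i)))⁻¹ =
    monom (fun j => φ (.b (.x j))) (T.a' i) * φ (.b (.t (T.s' i))) *
      (monom (fun j => φ (.b (.x j))) (T.a' i))⁻¹
  rk : ∀ i, φ (.b (.r i)) * φ (.b .k) * (φ (.b (.r i)))⁻¹ = φ (.b .k)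
  kt : Commute (φ (.b .k)) (φ (.b (.t h)))
  col : Collapse (φ (.c none 0 1)) (φ .z) (φ .z') (fun y => φ (.b y)) fun o i j => φ (.c o i j)

/-- The commutator of `k` with the element encoding the configuration `(s₀, n)`. The relations
force it to be trivial exactly when `(s₀, n)` is connected to `(h, 0)`. -/
def wOf {P : Type} [Group P] (s₀ : T.St) (j₀ : T.J) (n : ℕ) (φ : Gen T → P) : P :=
  ⁅φ (.b .k), φ (.b (.x j₀)) ^ n * φ (.b (.t s₀)) * (φ (.b (.x j₀)) ^ n)⁻¹⁆

variable {T}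

/-- A connection from `(s₀, α)` to `(h, 0)` makes `k` commute with the element that encodes
`(s₀, α)`. -/
lemma Good.commute {P : Type} [Group P] {h : T.St} {φ : Gen T → P} (H : Good T h φ)
    (X : Multiplicative (T.J → ℤ) →* P) [DecidableEq T.J]
    (hX : ∀ j (n : ℤ), X (ofAdd (Pi.single j n)) = φ (.b (.x j)) ^ n)
    (p : T.St × (T.J → ℤ)) (hp : T.Conn p (h, 0)) :
    Commute (φ (.b .k)) (X (ofAdd p.2) * φ (.b (.t p.1)) * (X (ofAdd p.2))⁻¹) := by
  have hm := monom_eq _ X hX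
  have conjX : ∀ i u, φ (.b (.r i)) * X (ofAdd (T.M i * u)) * (φ (.b (.r i)))⁻¹ =
      X (ofAdd (T.M' i * u)) := by
    intro i u
    rw [← hm, ← hm]
    have := map_monom (MulAut.conj (φ (.b (.r i)))).toMonoidHom (fun j => φ (.b (.x j)))
      (T.M i * u)
    simp only [MulEquiv.toMonoidHom_eq_coe, MonoidHom.coe_coe, MulAut.conj_apply] at this
    rw [this]
    simp only [monom]
    congr 2
    funext j
    simp only [Pi.mul_apply, zpow_mul, ← H.rx i j]
    rw [conj_zpow]
  have key : ∀ p q, T.Conn p q →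
      (Commute (φ (.b .k)) (X (ofAdd p.2) * φ (.b (.t p.1)) * (X (ofAdd p.2))⁻¹) ↔
        Commute (φ (.b .k)) (X (ofAdd q.2) * φ (.b (.t q.1)) * (X (ofAdd q.2))⁻¹)) := by
    intro p q hpq
    induction hpq with
    | rel p q hpq =>
      obtain ⟨i, u, rfl, rfl⟩ := hpq
      rw [← Commute.conj_iff (φ (.b (.r i))), H.rk]
      have : φ (.b (.r i)) * (X (ofAdd (T.a i + T.M i * u)) * φ (.b (.t (T.s i))) *
          (X (ofAdd (T.a i + T.M i * u)))⁻¹) * (φ (.b (.r i)))⁻¹ =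
          X (ofAdd (T.a' i + T.M' i * u)) * φ (.b (.t (T.s' i))) *
          (X (ofAdd (T.a' i + T.M' i * u)))⁻¹ := by
        have h1 := H.rt i
        simp only [hm] at h1
        rw [add_comm, add_comm (T.a' i), ofAdd_add, ofAdd_add, map_mul X, map_mul X, ← conjX]
        calc _ = (φ (.b (.r i)) * X (ofAdd (T.M i * u)) * (φ (.b (.r i)))⁻¹) *
              (φ (.b (.r i)) * (X (ofAdd (T.a i)) * φ (.b (.t (T.s i))) *
                (X (ofAdd (T.a i)))⁻¹) * (φ (.b (.r i)))⁻¹) *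
              (φ (.b (.r i)) * X (ofAdd (T.M i * u)) * (φ (.b (.r i)))⁻¹)⁻¹ := by group
          _ = _ := by rw [h1]; group
      rw [this]
    | refl => rfl
    | symm _ _ _ ih => exact ih.symm
    | trans _ _ _ _ _ ih₁ ih₂ => exact ih₁.trans ih₂
  rw [key p _ hp]
  simpa using H.kt

/-- If the computation halts, the relations are satisfied by trivial elements only. -/
theorem Good.trivial {P : Type} [Group P] {h s₀ : T.St} {j₀ : T.J} {n : ℕ} {φ : Gen T → P}
    (H : Good T h φ) (hw : φ (.c none 0 1) = wOf T s₀ j₀ n φ)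
    (hc : T.Conn (s₀, fun j => open Classical in if j = j₀ then (n : ℤ) else 0) (h, 0))
    (y : Gen T) : φ y = 1 := by
  classical
  obtain ⟨X, hX⟩ := exists_hom (fun j => φ (.b (.x j))) H.xx
  have h1 := H.commute X hX _ hc
  have h2 : (fun j => open Classical in if j = j₀ then (n : ℤ) else 0) = Pi.single j₀ (n : ℤ) := by
    funext j
    simp [Pi.single_apply]
  simp only [h2, hX, zpow_natCast] at h1
  have h3 : φ (.c none 0 1) = 1 := hw.trans (commutatorElement_eq_one_iff_commute.2 h1)
  obtain ⟨e1, e2, e3, e4⟩ := H.col.kill h3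
  cases y with
  | b y => exact e3 y
  | z => exact e1
  | z' => exact e2
  | c o i j => exact e4 o i j

/-- If the computation does not halt, the relations have a solution with `w` of infinite
order. -/
theorem exists_good (s₀ h : T.St) (j₀ : T.J) (n : ℕ)
    (hc : ¬ T.Conn (s₀, fun j => open Classical in if j = j₀ then (n : ℤ) else 0) (h, 0)) :
    ∃ (P : Type) (_ : Group P) (φ : Gen T → P), Good T h φ ∧
      φ (.c none 0 1) = wOf T s₀ j₀ n φ ∧ ∀ m : ℤ, φ (.c none 0 1) ^ m = 1 → m = 0 := by
  classical
  have h2 : (fun j => open Classical in if j = j₀ then (n : ℤ) else 0) = Pi.single j₀ (n : ℤ) := by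
    funext j
    simp [Pi.single_apply]
  rw [h2] at hc
  obtain ⟨Q, _, X, t, k, r, hrx, hrt, hrk, hkt, hw⟩ := model T s₀ h _ hc
  have hX : ∀ j (n : ℤ), X (ofAdd (Pi.single j n)) = X (ofAdd (Pi.single j 1)) ^ n := by
    intro j n
    rw [← map_zpow, ← ofAdd_zsmul, ← Pi.single_smul]
    simp
  let y : Bas T → Q := fun b => match b with
    | .x j => X (ofAdd (Pi.single j 1))
    | .t s => t s
    | .r i => r i
    | .k => k
  obtain ⟨P, _, f, z, z', c, hf, hcol⟩ := exists_collapse _ hw y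
  let φ : Gen T → P := fun g => match g with
    | .b b => f (y b)
    | .z => z
    | .z' => z'
    | .c o i j => c o i j
  have hw' : φ (.c none 0 1) = wOf T s₀ j₀ n φ := by
    change c none 0 1 = _
    rw [hcol.c1, hX]
    simp [wOf, φ, y, map_commutatorElement]
  have hm : ∀ α, monom (fun j => f (X (ofAdd (Pi.single j 1)))) α = f (X (ofAdd α)) := fun α => by
    rw [← map_monom f (fun j => X (ofAdd (Pi.single j 1))), monom_eq _ X hX]
  refine ⟨P, inferInstance, φ, ⟨?_, ?_, ?_, ?_, ?_, ?_⟩, hw', ?_⟩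
  · intro i j
    exact (((Commute.all _ _).map X).map f)
  · intro i j
    have := congrArg f (hrx i (Pi.single j 1))
    have e : ∀ v : T.J → ℤ, v * Pi.single j 1 = Pi.single j (v j) := by
      intro v
      funext i
      by_cases hi : i = j
      · subst hi; simp
      · simp [hi]
    rw [e, e, hX, hX j (T.M' i j)] at this
    simpa [φ, y] using this
  · intro i
    have := congrArg f (hrt i)
    simp only [φ, y, hm]
    simpa using this
  · intro i
    simpa [φ, y] using congrArg f (hrk i)
  · exact hkt.map f
  · change Collapse (c none 0 1) z z' (fun b => f (y b)) c
    rw [hcol.c1]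
    exact hcol
  · intro m hm
    change c none 0 1 ^ m = 1 at hm
    rw [hcol.c1, ← map_zpow] at hm
    exact hw m (hf (hm.trans (map_one f).symm))
end Pres
end CommSolv

namespace CommSolv
open scoped commutatorElement

section FixedRels
variable (T : Sys)

/-- The finitely many relators that express `Good`. -/
noncomputable def fixedRels (h : T.St) : Set (FreeGroup (Gen T)) :=
  let o : Gen T → FreeGroup (Gen T) := FreeGroup.of
  let mon := monom fun j => o (.b (.x j))
  Set.range (fun p : T.J × T.J => ⁅o (.b (.x p.1)), o (.b (.x p.2))⁆) ∪
  Set.range (fun p : T.I × T.J => o (.b (.r p.1)) * o (.b (.x p.2)) ^ T.M p.1 p.2 *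
    (o (.b (.r p.1)))⁻¹ * (o (.b (.x p.2)) ^ T.M' p.1 p.2)⁻¹) ∪
  Set.range (fun i : T.I => o (.b (.r i)) * (mon (T.a i) * o (.b (.t (T.s i))) * (mon (T.a i))⁻¹) *
    (o (.b (.r i)))⁻¹ * (mon (T.a' i) * o (.b (.t (T.s' i))) * (mon (T.a' i))⁻¹)⁻¹) ∪
  Set.range (fun i : T.I => o (.b (.r i)) * o (.b .k) * (o (.b (.r i)))⁻¹ * (o (.b .k))⁻¹) ∪
  Set.range (fun _ : Unit => ⁅o (.b .k), o (.b (.t h))⁆) ∪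
  Set.range (fun p : Option (Option (Bas T)) × Fin 3 => o (.c p.1 p.2 p.2)) ∪
  Set.range (fun p : Option (Option (Bas T)) × Fin 3 × Fin 3 × Fin 3 =>
    if p.2.1 ≠ p.2.2.1 ∧ p.2.1 ≠ p.2.2.2 ∧ p.2.2.2 ≠ p.2.2.1 then o (.c p.1 p.2.1 p.2.2.1) *
      ⁅o (.c p.1 p.2.1 p.2.2.2), o (.c p.1 p.2.2.2 p.2.2.1)⁆⁻¹ else 1) ∪
  Set.range (fun _ : Unit => o (.c none 0 2) * (o .z)⁻¹) ∪
  Set.range (fun p : Option (Bas T) => o (.c (some p) 0 1) * (o .z)⁻¹) ∪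
  Set.range (fun _ : Unit => o (.c (some none) 0 2) * (o .z')⁻¹) ∪
  Set.range (fun y : Bas T => o (.c (some (some y)) 0 2) * (o (.b y) * o .z')⁻¹)

lemma fixedRels_finite (h : T.St) : (fixedRels T h).Finite := by
  simp only [fixedRels, Set.finite_union, Set.finite_range, and_self]

lemma good_iff (h : T.St) {P : Type} [Group P] (φ : Gen T → P) :
    (∀ g ∈ fixedRels T h, FreeGroup.lift φ g = 1) ↔ Good T h φ := by
  simp only [fixedRels, Set.mem_union, or_imp, forall_and, Set.forall_mem_range, map_mul, map_inv,
    map_commutatorElement, FreeGroup.lift_apply_of, commutatorElement_eq_one_iff_commute, map_zpow,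
    mul_inv_eq_one, map_monom, Prod.forall, apply_ite (FreeGroup.lift φ), map_one]
  constructor
  · rintro ⟨⟨⟨⟨⟨⟨⟨⟨⟨⟨h1, h2⟩, h3⟩, h4⟩, h5⟩, h6⟩, h7⟩, h8⟩, h9⟩, h10⟩, h11⟩
    refine ⟨h1, h2, h3, h4, h5 (), ⟨fun o => ⟨h6 o, fun i j k a b c => ?_⟩, rfl, h8 (), h9,
      h10 (), h11⟩⟩
    have := h7 o i j k
    rwa [if_pos ⟨a, b, c⟩, mul_inv_eq_one] at this
  · rintro ⟨h1, h2, h3, h4, h5, ⟨h6, -, h8, h9, h10, h11⟩⟩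
    refine ⟨⟨⟨⟨⟨⟨⟨⟨⟨⟨h1, h2⟩, h3⟩, h4⟩, fun _ => h5⟩, fun o => (h6 o).diag⟩, ?_⟩, fun _ => h8⟩, h9⟩,
      fun _ => h10⟩, h11⟩
    intro o i j k
    split_ifs with hd
    · rw [mul_inv_eq_one]
      exact (h6 o).comm i j k hd.1 hd.2.1 hd.2.2
    · rfl

/-- A word for the relator that identifies `c none 0 1` with `w`, for input `n`. -/
def wWord (s₀ : T.St) (j₀ : T.J) (n : ℕ) : List (Gen T × Bool) :=
  [(.c none 0 1, true)] ++ (List.replicate n (.b (.x j₀), true) ++ ([(.b (.t s₀), true)] ++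
  (List.replicate n (.b (.x j₀), false) ++ ([(.b .k, true)] ++
  (List.replicate n (.b (.x j₀), true) ++ ([(.b (.t s₀), false)] ++
  (List.replicate n (.b (.x j₀), false) ++ [(.b .k, false)])))))))

lemma lift_wWord (s₀ : T.St) (j₀ : T.J) (n : ℕ) {P : Type} [Group P] (φ : Gen T → P) :
    FreeGroup.lift φ (FreeGroup.mk (wWord T s₀ j₀ n)) = 1 ↔
      φ (.c none 0 1) = wOf T s₀ j₀ n φ := by
  have : FreeGroup.lift φ (FreeGroup.mk (wWord T s₀ j₀ n)) =
      φ (.c none 0 1) * (wOf T s₀ j₀ n φ)⁻¹ := by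
    rw [FreeGroup.lift_mk]
    simp [wWord, wOf, commutatorElement_def, mul_assoc]
  rw [this, mul_inv_eq_one]

/-- The relators of the group attached to input `n`. -/
noncomputable def pRels (s₀ h : T.St) (j₀ : T.J) (n : ℕ) : Set (FreeGroup (Gen T)) :=
  insert (FreeGroup.mk (wWord T s₀ j₀ n)) (fixedRels T h)

lemma pRels_iff (s₀ h : T.St) (j₀ : T.J) (n : ℕ) {P : Type} [Group P] (φ : Gen T → P) :
    (∀ g ∈ pRels T s₀ h j₀ n, FreeGroup.lift φ g = 1) ↔
      φ (.c none 0 1) = wOf T s₀ j₀ n φ ∧ Good T h φ := by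
  rw [pRels, Set.forall_mem_insert, lift_wWord, good_iff]

/-- The group attached to input `n` is trivial if the computation halts. -/
theorem pres_trivial (s₀ h : T.St) (j₀ : T.J) (n : ℕ)
    (hc : T.Conn (s₀, fun j => open Classical in if j = j₀ then (n : ℤ) else 0) (h, 0)) :
    Subsingleton (PresentedGroup (pRels T s₀ h j₀ n)) := by
  obtain ⟨h1, h2⟩ := (pRels_iff T s₀ h j₀ n
    (PresentedGroup.of : Gen T → PresentedGroup (pRels T s₀ h j₀ n))).1 (by
      intro g hg
      have : FreeGroup.lift PresentedGroup.of = PresentedGroup.mk (pRels T s₀ h j₀ n) := by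
        ext y; simp [PresentedGroup.of]
      rw [this]
      exact PresentedGroup.one_of_mem hg)
  have : MonoidHom.id (PresentedGroup (pRels T s₀ h j₀ n)) = 1 := by
    apply PresentedGroup.ext
    exact h2.trivial h1 hc
  exact ⟨fun a b => by
    rw [← MonoidHom.id_apply _ a, ← MonoidHom.id_apply _ b, this]; rfl⟩

/-- The group attached to input `n` has an element of infinite order if the computation does not
halt. -/
theorem pres_infinite (s₀ h : T.St) (j₀ : T.J) (n : ℕ)
    (hc : ¬ T.Conn (s₀, fun j => open Classical in if j = j₀ then (n : ℤ) else 0) (h, 0)) :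
    ∃ z : PresentedGroup (pRels T s₀ h j₀ n), ∀ m : ℕ, 0 < m → z ^ m ≠ 1 := by
  obtain ⟨P, _, φ, h1, h2, h3⟩ := exists_good s₀ h j₀ n hc
  have H := (pRels_iff T s₀ h j₀ n φ).2 ⟨h2, h1⟩
  refine ⟨PresentedGroup.of (.c none 0 1), fun m hm hz => ?_⟩
  have := congrArg (PresentedGroup.toGroup H) hz
  rw [map_pow, map_one, PresentedGroup.toGroup.of] at this
  have := h3 m (by exact_mod_cast this)
  omega
end FixedRels
end CommSolv

namespace CommSolv

/-! ### Commensurability invariants -/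

/-- `G` virtually looks like a product of two infinite groups: it has two infinite subgroups
commuting elementwise such that every element has a positive power in their product. -/
def VirtProd (G : Type*) [Group G] : Prop :=
  ∃ A B : Subgroup G, Infinite A ∧ Infinite B ∧ (∀ a ∈ A, ∀ b ∈ B, Commute a b) ∧
    ∀ g : G, ∃ n : ℕ, 0 < n ∧ ∃ a ∈ A, ∃ b ∈ B, g ^ n = a * b

lemma infinite_inter {G : Type*} [Group G] (A K : Subgroup G) (hK : K.index ≠ 0)
    (hA : Infinite A) : Infinite (A.subgroupOf K) := by
  have h1 : K.relIndex A ≠ 0 := by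
    intro h
    exact hK (by
      by_contra h2
      exact h2 (Subgroup.index_eq_zero_of_relIndex_eq_zero h))
  have h2 : Infinite (K.subgroupOf A) := by
    by_contra hf
    rw [not_infinite_iff_finite] at hf
    have : Nat.card (K.subgroupOf A) * (K.subgroupOf A).index = Nat.card A :=
      Subgroup.card_mul_index _
    rw [Nat.card_eq_zero_of_infinite (α := A)] at this
    rcases Nat.mul_eq_zero.1 this with h | h
    · exact Nat.card_pos.ne' h
    · exact h1 h
  let f : K.subgroupOf A → A.subgroupOf K := fun x => ⟨⟨x.1.1, x.2⟩, x.1.2⟩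
  refine Infinite.of_injective f ?_
  intro x y h
  have := congrArg (fun z : A.subgroupOf K => (z.1.1 : G)) h
  exact Subtype.ext (Subtype.ext this)

lemma VirtProd.subgroup {G : Type*} [Group G] (K : Subgroup G) (hK : K.index ≠ 0)
    (h : VirtProd G) : VirtProd K := by
  obtain ⟨A, B, hA, hB, hc, hp⟩ := h
  refine ⟨A.subgroupOf K, B.subgroupOf K, infinite_inter A K hK hA, infinite_inter B K hK hB,
    fun a ha b hb => Subtype.ext (hc a.1 ha b.1 hb), fun g => ?_⟩
  obtain ⟨n, hn, a, ha, b, hb, e⟩ := hp g.1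
  obtain ⟨p, hp0, -, hpa⟩ := Subgroup.exists_pow_mem_of_index_ne_zero hK a
  obtain ⟨q, hq0, -, hqb⟩ := Subgroup.exists_pow_mem_of_index_ne_zero hK b
  refine ⟨n * (p * q), by positivity, ⟨a ^ (p * q), ?_⟩, ?_, ⟨b ^ (p * q), ?_⟩, ?_, ?_⟩
  · rw [pow_mul]; exact pow_mem hpa _
  · exact pow_mem ha _
  · rw [mul_comm, pow_mul]; exact pow_mem hqb _
  · exact pow_mem hb _
  · apply Subtype.ext
    push_cast
    rw [pow_mul, e, (hc a ha b hb).mul_pow]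

lemma VirtProd.of_subgroup {G : Type*} [Group G] (K : Subgroup G) (hK : K.index ≠ 0)
    (h : VirtProd K) : VirtProd G := by
  obtain ⟨A, B, hA, hB, hc, hp⟩ := h
  refine ⟨A.map K.subtype, B.map K.subtype, ?_, ?_, ?_, fun g => ?_⟩
  · exact (A.equivMapOfInjective _ K.subtype_injective).toEquiv.infinite_iff.1 hA
  · exact (B.equivMapOfInjective _ K.subtype_injective).toEquiv.infinite_iff.1 hB
  · rintro _ ⟨a, ha, rfl⟩ _ ⟨b, hb, rfl⟩
    exact congrArg Subtype.val (hc a ha b hb)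
  · obtain ⟨p, hp0, -, hpa⟩ := Subgroup.exists_pow_mem_of_index_ne_zero hK g
    obtain ⟨n, hn, a, ha, b, hb, e⟩ := hp ⟨_, hpa⟩
    refine ⟨p * n, by positivity, a, ⟨a, ha, rfl⟩, b, ⟨b, hb, rfl⟩, ?_⟩
    rw [pow_mul]
    exact congrArg Subtype.val e

lemma VirtProd.of_equiv {G H : Type*} [Group G] [Group H] (e : G ≃* H) (h : VirtProd G) :
    VirtProd H := by
  obtain ⟨A, B, hA, hB, hc, hp⟩ := h
  refine ⟨A.map e.toMonoidHom, B.map e.toMonoidHom, ?_, ?_, ?_, fun g => ?_⟩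
  · exact (A.equivMapOfInjective _ e.injective).toEquiv.infinite_iff.1 hA
  · exact (B.equivMapOfInjective _ e.injective).toEquiv.infinite_iff.1 hB
  · rintro _ ⟨a, ha, rfl⟩ _ ⟨b, hb, rfl⟩
    exact (hc a ha b hb).map e.toMonoidHom
  · obtain ⟨n, hn, a, ha, b, hb, h⟩ := hp (e.symm g)
    refine ⟨n, hn, _, ⟨a, ha, rfl⟩, _, ⟨b, hb, rfl⟩, ?_⟩
    have := congrArg e h
    simpa using this

lemma VirtProd.of_comm {G H : Type*} [Group G] [Group H] (h : GroupCommensurable G H)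
    (hG : VirtProd G) : VirtProd H := by
  obtain ⟨K₁, K₂, h1, h2, ⟨e⟩⟩ := h
  exact ((hG.subgroup K₁ h1).of_equiv e).of_subgroup K₂ h2

lemma comm_symm {G H : Type*} [Group G] [Group H] (h : GroupCommensurable G H) :
    GroupCommensurable H G := by
  obtain ⟨K₁, K₂, h1, h2, ⟨e⟩⟩ := h
  exact ⟨K₂, K₁, h2, h1, ⟨e.symm⟩⟩

lemma infinite_of_comm {G H : Type*} [Group G] [Group H] (h : GroupCommensurable G H)
    (hG : Infinite G) : Infinite H := by
  obtain ⟨K₁, K₂, h1, h2, ⟨e⟩⟩ := h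
  have : Infinite K₁ := by
    by_contra hf
    rw [not_infinite_iff_finite] at hf
    have := Subgroup.card_mul_index K₁
    rw [Nat.card_eq_zero_of_infinite (α := G)] at this
    rcases Nat.mul_eq_zero.1 this with h | h
    · exact Nat.card_pos.ne' h
    · exact h1 h
  have : Infinite K₂ := e.toEquiv.infinite_iff.1 this
  exact Infinite.of_injective _ K₂.subtype_injective

lemma virtProd_prod (G P : Type*) [Group G] [Group P] [Infinite G] [Infinite P] :
    VirtProd (G × P) := by
  refine ⟨(MonoidHom.inl G P).range, (MonoidHom.inr G P).range, ?_, ?_, ?_, ?_⟩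
  · exact (MonoidHom.ofInjective (f := MonoidHom.inl G P)
      (fun a b h => congrArg Prod.fst h)).toEquiv.infinite_iff.1 ‹_›
  · exact (MonoidHom.ofInjective (f := MonoidHom.inr G P)
      (fun a b h => congrArg Prod.snd h)).toEquiv.infinite_iff.1 ‹_›
  · rintro _ ⟨a, rfl⟩ _ ⟨b, rfl⟩
    exact MonoidHom.commute_inl_inr a b
  · rintro ⟨g, p⟩
    exact ⟨1, one_pos, _, ⟨g, rfl⟩, _, ⟨p, rfl⟩, by simp⟩

/-! ### Malnormality of the factors of a free product -/

section FreeProduct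
open Monoid CoprodI

variable {ι : Type*} [DecidableEq ι] {M : ι → Type*} [∀ i, Group (M i)]

/-- Strip the last letter of a reduced word if it lies in the factor `j`. -/
lemma strip (j : ι) {i k : ι} (w : NeWord M i k) :
    (∃ p : M j, w.prod = of p) ∨
      ∃ (k' : ι) (w' : NeWord M i k') (p : M j), k' ≠ j ∧ w.prod = w'.prod * of p := by
  induction w with
  | @singleton i x hx =>
    by_cases h : i = j
    · subst h; exact Or.inl ⟨x, by simp⟩
    · exact Or.inr ⟨i, .singleton x hx, 1, h, by simp⟩
  | @append a b c d w₁ hne w₂ ih₁ ih₂ =>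
    rcases ih₂ with ⟨p, hp⟩ | ⟨k', w', p, hk, hp⟩
    · by_cases hb : b = j
      · rcases ih₁ with ⟨q, hq⟩ | ⟨k', w', q, hk, hq⟩
        · exact Or.inl ⟨q * p, by simp [NeWord.append_prod, hp, hq]⟩
        · exact Or.inr ⟨k', w', q * p, hk, by simp [NeWord.append_prod, hp, hq, mul_assoc]⟩
      · exact Or.inr ⟨b, w₁, p, hb, by simp [NeWord.append_prod, hp]⟩
    · exact Or.inr ⟨k', .append w₁ hne w', p, hk, by simp [NeWord.append_prod, hp, mul_assoc]⟩

lemma strip' (j : ι) (x : CoprodI M) (hx : x ∉ (of (i := j) : M j →* CoprodI M).range) :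
    ∃ (i k' : ι) (w' : NeWord M i k') (p : M j), k' ≠ j ∧ x = w'.prod * of p := by
  classical
  have hne : Word.equiv x ≠ Word.empty := by
    intro h
    apply hx
    have : x = (Word.equiv x).prod := (Word.equiv.symm_apply_apply x).symm
    rw [this, h]; exact ⟨1, by simp⟩
  obtain ⟨i, k, w, hw⟩ := NeWord.of_word _ hne
  have hxw : x = w.prod := by
    rw [NeWord.prod, hw]; exact (Word.equiv.symm_apply_apply x).symm
  rcases strip j w with ⟨p, hp⟩ | ⟨k', w', p, hk, hp⟩
  · exact absurd ⟨p, by rw [hxw, hp]⟩ hx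
  · exact ⟨i, k', w', p, hk, hxw.trans hp⟩

/-- The factors of a free product are malnormal. -/
lemma malnormal (j : ι) (x : CoprodI M) (p : M j) (hp : p ≠ 1)
    (h : x * of p * x⁻¹ ∈ (of (i := j) : M j →* CoprodI M).range) :
    x ∈ (of (i := j) : M j →* CoprodI M).range := by
  classical
  by_contra hx
  obtain ⟨i, k, w, q, hk, rfl⟩ := strip' j x hx
  obtain ⟨r, hr⟩ := h
  have hq : q * p * q⁻¹ ≠ 1 := by simpa using hp
  let N : NeWord M i i :=
    .append (.append w hk (.singleton (q * p * q⁻¹) hq)) hk.symm w.inv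
  have hN : N.prod = of r := by
    rw [hr]; simp [N, NeWord.append_prod, mul_assoc]
  have hlen : 2 ≤ N.toList.length := by
    have h1 : w.toList.length ≠ 0 := by simpa using w.toList_ne_nil
    simp only [N, NeWord.toList, List.length_append, List.length_singleton]
    omega
  by_cases hr1 : r = 1
  · subst hr1
    have : N.toWord = Word.empty := by
      apply Word.equiv.symm.injective
      show N.prod = _
      rw [hN]; simp [Word.equiv]
    have h2 : N.toWord.toList = [] := by rw [this]; rfl
    exact N.toList_ne_nil h2
  · have : N.toWord = (NeWord.singleton r hr1).toWord := by
      apply Word.equiv.symm.injective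
      show N.prod = (NeWord.singleton r hr1).prod
      rw [hN]; simp
    have h2 : N.toList = [⟨j, r⟩] := by
      have := congrArg Word.toList this
      exact this
    rw [h2] at hlen
    simp at hlen

/-- A free product of a nontrivial group and a group with an element `z` of infinite order is not
virtually a product: by malnormality, the centraliser of a nontrivial element of a factor is in
that factor, hence so are both commuting subgroups, and so is a power of any conjugate of `z`. -/
lemma not_virtProd_coprodI (i j : ι) (hij : i ≠ j) (g : M i) (hg : g ≠ 1) (z : M j)
    (hz : ∀ n : ℕ, 0 < n → z ^ n ≠ 1) : ¬ VirtProd (CoprodI M) := by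
  classical
  rintro ⟨A, B, hA, hB, hc, hp⟩
  set R := (of (i := j) : M j →* CoprodI M).range with hR
  have cent : ∀ p ∈ R, p ≠ 1 → ∀ x, Commute x p → x ∈ R := by
    rintro _ ⟨p, rfl⟩ hp1 x hx
    refine malnormal j x p (fun h => hp1 (by rw [h, map_one])) ?_
    rw [hx.eq]; simp
  have nontriv : ∀ C : Subgroup (CoprodI M), Infinite C → ∃ c ∈ C, c ≠ 1 := by
    intro C hC
    obtain ⟨c, hc⟩ := exists_ne (1 : C)
    exact ⟨c, c.2, fun h => hc (Subtype.ext h)⟩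
  obtain ⟨n, hn, a, ha, b, hb, e⟩ := hp (of z)
  have hzn : (of z : CoprodI M) ^ n ≠ 1 := by
    rw [← map_pow]
    intro h
    exact hz n hn (of_injective j (by rw [h, map_one]))
  have hznR : (of z : CoprodI M) ^ n ∈ R := ⟨z ^ n, by simp⟩
  have hab := hc a ha b hb
  have haR : a ∈ R := cent _ hznR hzn a (by rw [e]; exact (Commute.refl a).mul_right hab)
  have hbR : b ∈ R := cent _ hznR hzn b (by rw [e]; exact hab.symm.mul_right (Commute.refl b))
  have key : ∃ a' ∈ A, a' ≠ 1 ∧ a' ∈ R := by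
    by_cases h1 : a = 1
    · have hb1 : b ≠ 1 := by
        rintro rfl; apply hzn; rw [e, h1, one_mul]
      obtain ⟨a', ha', hne⟩ := nontriv A hA
      exact ⟨a', ha', hne, cent b hbR hb1 _ (hc a' ha' b hb)⟩
    · exact ⟨a, ha, h1, haR⟩
  obtain ⟨a', ha', hne', haR'⟩ := key
  have hBR : ∀ b ∈ B, b ∈ R := fun b hb => cent a' haR' hne' b (hc a' ha' b hb).symm
  obtain ⟨b', hb', hbne'⟩ := nontriv B hB
  have hAR : ∀ a ∈ A, a ∈ R := fun a ha => cent b' (hBR b' hb') hbne' a (hc a ha b' hb')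
  obtain ⟨n, hn, a, ha, b, hb, e⟩ := hp (of g * of z * (of g)⁻¹)
  have hm : of g * of (z ^ n) * (of g)⁻¹ ∈ R := by
    have : (of g * of z * (of g)⁻¹ : CoprodI M) ^ n = of g * of (z ^ n) * (of g)⁻¹ := by
      rw [conj_pow, map_pow]
    rw [← this, e]
    exact mul_mem (hAR a ha) (hBR b hb)
  obtain ⟨r, hr⟩ := malnormal j (of g) (z ^ n) (hz n hn) hm
  have hr1 : r ≠ 1 := by
    rintro rfl
    rw [map_one] at hr
    exact hg (of_injective i (by rw [← hr, map_one]))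
  have : (NeWord.singleton r hr1).toWord = (NeWord.singleton g hg).toWord := by
    apply Word.equiv.symm.injective
    show (NeWord.singleton r hr1).prod = (NeWord.singleton g hg).prod
    simpa using hr
  have h2 : ([⟨j, r⟩] : List (Σ i, M i)) = [⟨i, g⟩] := congrArg Word.toList this
  simp at h2
  exact hij h2.1.symm

end FreeProduct

/-- The two-element family with members `G` and `P`. -/
@[reducible] def Fam (G P : Type) : Bool → Type
  | true => G
  | false => P

instance Fam.group (G P : Type) [Group G] [Group P] : ∀ b, Group (Fam G P b)
  | true => ‹Group G›
  | false => ‹Group P›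

/-- Depending on `G`, either the free product or the direct product with any group having an
element of infinite order leaves the commensurability class of `G`. -/
lemma dichotomy (G : Type) [Group G] :
    (∀ (P : Type) [Group P] (z : P), (∀ n : ℕ, 0 < n → z ^ n ≠ 1) →
      ¬ GroupCommensurable (Monoid.CoprodI (Fam G P)) G) ∨
    (∀ (P : Type) [Group P] (z : P), (∀ n : ℕ, 0 < n → z ^ n ≠ 1) →
      ¬ GroupCommensurable (G × P) G) := by
  have inf : ∀ (P : Type) [Group P] (z : P), (∀ n : ℕ, 0 < n → z ^ n ≠ 1) → Infinite P := by
    intro P _ z hz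
    by_contra hf
    rw [not_infinite_iff_finite] at hf
    exact hz (orderOf z) (orderOf_pos z) (pow_orderOf_eq_one z)
  by_cases hG : Finite G
  · refine Or.inl fun P _ z hz hc => ?_
    have := inf P z hz
    have h2 : Infinite (Monoid.CoprodI (Fam G P)) :=
      Infinite.of_injective (Monoid.CoprodI.of (M := Fam G P) (i := false))
        (Monoid.CoprodI.of_injective _)
    have := infinite_of_comm hc h2
    exact not_finite G
  · rw [not_finite_iff_infinite] at hG
    by_cases hV : VirtProd G
    · refine Or.inl fun P _ z hz hc => ?_
      obtain ⟨g, hg⟩ := exists_ne (1 : G)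
      exact not_virtProd_coprodI (M := Fam G P) true false (by simp) g hg z hz
        (hV.of_comm (comm_symm hc))
    · refine Or.inr fun P _ z hz hc => ?_
      have := inf P z hz
      exact hV ((virtProd_prod G P).of_comm hc)

end CommSolv

namespace CommSolv
open scoped commutatorElement
/-! ### Presentations of free and direct products, and their codes -/

section Products
variable {α β : Type}

/-- Relators on `α ⊔ β`: those of two given presentations, and a further set `C`. -/
def sumRels (R₁ : Set (FreeGroup α)) (R₂ : Set (FreeGroup β)) (C : Set (FreeGroup (α ⊕ β))) :
    Set (FreeGroup (α ⊕ β)) :=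
  FreeGroup.map Sum.inl '' R₁ ∪ FreeGroup.map Sum.inr '' R₂ ∪ C

variable (R₁ : Set (FreeGroup α)) (R₂ : Set (FreeGroup β)) (C : Set (FreeGroup (α ⊕ β)))

/-- The homomorphism from the first presented group. -/
def inlHom : PresentedGroup R₁ →* PresentedGroup (sumRels R₁ R₂ C) :=
  PresentedGroup.toGroup (f := fun a => PresentedGroup.of (Sum.inl a)) (by
    intro g hg
    have : FreeGroup.lift (fun a => (PresentedGroup.of (Sum.inl a) :
        PresentedGroup (sumRels R₁ R₂ C))) =
        (PresentedGroup.mk (sumRels R₁ R₂ C)).comp (FreeGroup.map Sum.inl) := by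
      ext y; simp [PresentedGroup.of]
    rw [this]
    exact PresentedGroup.one_of_mem (Or.inl (Or.inl ⟨g, hg, rfl⟩)))

/-- The homomorphism from the second presented group. -/
def inrHom : PresentedGroup R₂ →* PresentedGroup (sumRels R₁ R₂ C) :=
  PresentedGroup.toGroup (f := fun a => PresentedGroup.of (Sum.inr a)) (by
    intro g hg
    have : FreeGroup.lift (fun a => (PresentedGroup.of (Sum.inr a) :
        PresentedGroup (sumRels R₁ R₂ C))) =
        (PresentedGroup.mk (sumRels R₁ R₂ C)).comp (FreeGroup.map Sum.inr) := by
      ext y; simp [PresentedGroup.of]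
    rw [this]
    exact PresentedGroup.one_of_mem (Or.inl (Or.inr ⟨g, hg, rfl⟩)))

@[simp] lemma inlHom_of (a : α) : inlHom R₁ R₂ C (PresentedGroup.of a) =
    PresentedGroup.of (Sum.inl a) := by simp [inlHom]
@[simp] lemma inrHom_of (a : β) : inrHom R₁ R₂ C (PresentedGroup.of a) =
    PresentedGroup.of (Sum.inr a) := by simp [inrHom]

/-- Recognition of the group presented by `sumRels`: a group `W` generated by images of the two
presented groups, in which `C` holds, and from which one can map back. -/
lemma sum_equiv {W : Type} [Group W] (a : PresentedGroup R₁ →* W) (b : PresentedGroup R₂ →* W)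
    (hC : ∀ g ∈ C, FreeGroup.lift (Sum.elim (fun i => a (.of i)) (fun j => b (.of j))) g = 1)
    (back : W →* PresentedGroup (sumRels R₁ R₂ C)) (hba : back.comp a = inlHom R₁ R₂ C)
    (hbb : back.comp b = inrHom R₁ R₂ C)
    (hgen : ∀ f g : W →* W, f.comp a = g.comp a → f.comp b = g.comp b → f = g) :
    Nonempty (PresentedGroup (sumRels R₁ R₂ C) ≃* W) := by
  let φ : α ⊕ β → W := Sum.elim (fun i => a (.of i)) (fun j => b (.of j))
  have h1 : (FreeGroup.lift φ).comp (FreeGroup.map Sum.inl) = a.comp (PresentedGroup.mk R₁) := by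
    ext i; simp [φ, PresentedGroup.of]
  have h2 : (FreeGroup.lift φ).comp (FreeGroup.map Sum.inr) = b.comp (PresentedGroup.mk R₂) := by
    ext i; simp [φ, PresentedGroup.of]
  have hφ : ∀ g ∈ sumRels R₁ R₂ C, FreeGroup.lift φ g = 1 := by
    rintro g ((⟨g, hg, rfl⟩ | ⟨g, hg, rfl⟩) | hg)
    · rw [← MonoidHom.comp_apply, h1, MonoidHom.comp_apply]
      have : PresentedGroup.mk R₁ g = 1 := PresentedGroup.one_of_mem hg
      rw [this, map_one]
    · rw [← MonoidHom.comp_apply, h2, MonoidHom.comp_apply]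
      have : PresentedGroup.mk R₂ g = 1 := PresentedGroup.one_of_mem hg
      rw [this, map_one]
    · exact hC g hg
  let F := PresentedGroup.toGroup hφ
  have hFa : F.comp (inlHom R₁ R₂ C) = a := by
    apply PresentedGroup.ext; intro i; simp [F, φ]
  have hFb : F.comp (inrHom R₁ R₂ C) = b := by
    apply PresentedGroup.ext; intro i; simp [F, φ]
  refine ⟨MonoidHom.toMulEquiv F back ?_ ?_⟩
  · apply PresentedGroup.ext
    rintro (i | i)
    · have := DFunLike.congr_fun hba (.of i)
      simpa [F, φ] using this
    · have := DFunLike.congr_fun hbb (.of i)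
      simpa [F, φ] using this
  · apply hgen
    · rw [MonoidHom.comp_assoc, hba, hFa]; rfl
    · rw [MonoidHom.comp_assoc, hbb, hFb]; rfl

lemma sum_equiv_coprod : Nonempty (PresentedGroup (sumRels R₁ R₂ ∅) ≃*
    Monoid.CoprodI (Fam (PresentedGroup R₁) (PresentedGroup R₂))) := by
  let M := Fam (PresentedGroup R₁) (PresentedGroup R₂)
  refine sum_equiv R₁ R₂ ∅ (Monoid.CoprodI.of (M := M) (i := true))
    (Monoid.CoprodI.of (M := M) (i := false)) (by simp)
    (Monoid.CoprodI.lift fun b => match b with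
      | true => inlHom R₁ R₂ ∅
      | false => inrHom R₁ R₂ ∅) ?_ ?_ ?_
  · ext x; simp [M]
  · ext x; simp [M]
  · intro f g h1 h2
    apply Monoid.CoprodI.ext_hom
    rintro (_ | _)
    exacts [h2, h1]

/-- The commutators of the letters in `α` with those in `β`. -/
def crossComm (α β : Type) : Set (FreeGroup (α ⊕ β)) :=
  Set.range fun p : α × β => ⁅(FreeGroup.of (Sum.inl p.1) : FreeGroup (α ⊕ β)),
    (FreeGroup.of (Sum.inr p.2) : FreeGroup (α ⊕ β))⁆

lemma inl_inr_commute (x : PresentedGroup R₁) (y : PresentedGroup R₂) :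
    Commute (inlHom R₁ R₂ (crossComm α β) x) (inrHom R₁ R₂ (crossComm α β) y) := by
  have h0 : ∀ i j, Commute (inlHom R₁ R₂ (crossComm α β) (.of i))
      (inrHom R₁ R₂ (crossComm α β) (.of j)) := by
    intro i j
    rw [inlHom_of, inrHom_of, ← commutatorElement_eq_one_iff_commute]
    exact PresentedGroup.one_of_mem (rels := sumRels R₁ R₂ (crossComm α β))
      (Or.inr ⟨(i, j), rfl⟩)
  have h1 : ∀ x j, Commute (inlHom R₁ R₂ (crossComm α β) x)
      (inrHom R₁ R₂ (crossComm α β) (.of j)) := by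
    intro x j
    have : (MulAut.conj (inrHom R₁ R₂ (crossComm α β) (.of j))).toMonoidHom.comp
        (inlHom R₁ R₂ (crossComm α β)) = inlHom R₁ R₂ (crossComm α β) := by
      apply PresentedGroup.ext
      intro i
      exact mul_inv_eq_iff_eq_mul.2 (h0 i j).symm.eq
    exact Commute.symm (mul_inv_eq_iff_eq_mul.1 (DFunLike.congr_fun this x))
  have : (MulAut.conj (inlHom R₁ R₂ (crossComm α β) x)).toMonoidHom.comp
      (inrHom R₁ R₂ (crossComm α β)) = inrHom R₁ R₂ (crossComm α β) := by
    apply PresentedGroup.ext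
    intro j
    exact mul_inv_eq_iff_eq_mul.2 (h1 x j).eq
  exact mul_inv_eq_iff_eq_mul.1 (DFunLike.congr_fun this y)

lemma sum_equiv_prod : Nonempty (PresentedGroup (sumRels R₁ R₂ (crossComm α β)) ≃*
    PresentedGroup R₁ × PresentedGroup R₂) := by
  refine sum_equiv R₁ R₂ _ (MonoidHom.inl _ _) (MonoidHom.inr _ _) ?_
    (MonoidHom.noncommCoprod (inlHom R₁ R₂ _) (inrHom R₁ R₂ _) (inl_inr_commute R₁ R₂)) ?_ ?_ ?_
  · rintro _ ⟨p, rfl⟩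
    rw [map_commutatorElement, commutatorElement_eq_one_iff_commute]
    simpa using MonoidHom.commute_inl_inr _ _
  · ext x; simp
  · ext x; simp
  · intro f g h1 h2
    ext1 p
    rw [show p = MonoidHom.inl _ _ p.1 * MonoidHom.inr _ _ p.2 by ext <;> simp, map_mul, map_mul]
    exact congrArg₂ (· * ·) (DFunLike.congr_fun h1 p.1) (DFunLike.congr_fun h2 p.2)

lemma coprod_equiv_left (G P : Type) [Group G] [Group P] [Subsingleton P] :
    Nonempty (Monoid.CoprodI (Fam G P) ≃* G) := by
  refine ⟨MonoidHom.toMulEquiv (Monoid.CoprodI.lift fun b => match b with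
      | true => MonoidHom.id G
      | false => 1) (Monoid.CoprodI.of (M := Fam G P) (i := true)) ?_ ?_⟩
  · apply Monoid.CoprodI.ext_hom
    rintro (_ | _)
    · ext x
      rw [show x = 1 from Subsingleton.elim (α := P) _ _, map_one, map_one]
    · ext x; simp
  · ext x; simp

end Products

section Transport

lemma GroupCommensurable.of_equiv_left {G H K : Type} [Group G] [Group H] [Group K]
    (e : G ≃* H) (h : GroupCommensurable G K) : GroupCommensurable H K := by
  obtain ⟨K₁, K₂, h1, h2, ⟨f⟩⟩ := h
  refine ⟨K₁.map e.toMonoidHom, K₂, ?_, h2, ⟨(e.subgroupMap K₁).symm.trans f⟩⟩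
  rwa [MulEquiv.toMonoidHom_eq_coe, Subgroup.index_map_equiv]

lemma GroupCommensurable.of_equiv {G H : Type} [Group G] [Group H] (e : G ≃* H) :
    GroupCommensurable G H :=
  ⟨⊤, ⊤, by simp, by simp, ⟨Subgroup.topEquiv.trans (e.trans Subgroup.topEquiv.symm)⟩⟩

end Transport

section Codes
variable {Y : Type}

/-- The coded form of a word on letters numbered by `e`. -/
def encWord {N : ℕ} (e : Y ≃ Fin N) (w : List (Y × Bool)) : List (ℕ × Bool) :=
  w.map fun p => ((e p.1 : ℕ), p.2)

lemma wordToFree_encWord {N : ℕ} (e : Y ≃ Fin N) (w : List (Y × Bool)) :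
    wordToFree N (encWord e w) = FreeGroup.freeGroupCongr e (FreeGroup.mk w) := by
  have h : ∀ w : List (Y × Bool), wordToFree N (encWord e w) =
      (w.map fun p => bif p.2 then FreeGroup.of (e p.1) else (FreeGroup.of (e p.1))⁻¹).prod := by
    intro w
    rw [wordToFree, encWord, List.map_map]
    congr 2
    funext p
    have hp := (e p.1).2
    have h0 : 0 < N := by omega
    have he : (⟨(e p.1 : ℕ) % N, Nat.mod_lt _ h0⟩ : Fin N) = e p.1 :=
      Fin.ext (Nat.mod_eq_of_lt hp)
    cases hb : p.2 <;> simp [h0, hb, he]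
  rw [h, FreeGroup.freeGroupCongr_apply, FreeGroup.map_eq_lift, FreeGroup.lift_mk]
  simp

lemma code_equiv {N : ℕ} (e : Y ≃ Fin N) (L : List (List (Y × Bool))) :
    Nonempty (codeGroup (N, L.map (encWord e)) ≃* PresentedGroup {g | ∃ w ∈ L, g = FreeGroup.mk w}) := by
  have : codeRels (N, L.map (encWord e)) =
      FreeGroup.freeGroupCongr e '' {g | ∃ w ∈ L, g = FreeGroup.mk w} := by
    ext g
    constructor
    · rintro ⟨w, hw, rfl⟩
      obtain ⟨v, hv, rfl⟩ := List.mem_map.1 hw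
      exact ⟨_, ⟨v, hv, rfl⟩, (wordToFree_encWord e v).symm⟩
    · rintro ⟨_, ⟨v, hv, rfl⟩, rfl⟩
      exact ⟨_, List.mem_map.2 ⟨v, hv, rfl⟩, (wordToFree_encWord e v).symm⟩
  change Nonempty (PresentedGroup (codeRels _) ≃* _)
  rw [this]
  exact ⟨(PresentedGroup.equivPresentedGroup _ e).symm⟩

end Codes
end CommSolv

namespace CommSolv
open scoped commutatorElement
/-! ### The family of codes and its computability -/

section Family
variable (T : Sys) (s₀ h : T.St) (j₀ : T.J) {α : Type} (R₁ : Set (FreeGroup α))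
  (C : Set (FreeGroup (α ⊕ Gen T)))

/-- The relators of `sumRels` that do not depend on the input. -/
def constRels : Set (FreeGroup (α ⊕ Gen T)) :=
  FreeGroup.map Sum.inl '' R₁ ∪ FreeGroup.map Sum.inr '' fixedRels T h ∪ C

lemma sumRels_pRels (n : ℕ) : sumRels R₁ (pRels T s₀ h j₀ n) C =
    insert (FreeGroup.mk ((wWord T s₀ j₀ n).map fun p => (Sum.inr p.1, p.2)))
      (constRels T h R₁ C) := by
  rw [sumRels, pRels, Set.image_insert_eq, FreeGroup.map.mk, constRels, Set.union_insert,
    Set.insert_union]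

/-- The words of the presentation `sumRels R₁ (pRels T s₀ h j₀ n) C`, the words `K` for the
constant relators being given. -/
def famWords (K : List (List ((α ⊕ Gen T) × Bool))) (n : ℕ) :
    List (List ((α ⊕ Gen T) × Bool)) :=
  ((wWord T s₀ j₀ n).map fun p => (Sum.inr p.1, p.2)) :: K

lemma exists_words {γ : Type} {R : Set (FreeGroup γ)} (hR : R.Finite) :
    ∃ K : List (List (γ × Bool)), {g | ∃ w ∈ K, g = FreeGroup.mk w} = R := by
  classical
  refine ⟨hR.toFinset.toList.map FreeGroup.toWord, ?_⟩
  ext g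
  simp only [Set.mem_ofPred_eq, List.mem_map, Finset.mem_toList, Set.Finite.mem_toFinset]
  constructor
  · rintro ⟨_, ⟨g, hg, rfl⟩, rfl⟩
    rwa [FreeGroup.mk_toWord]
  · intro hg
    exact ⟨_, ⟨g, hg, rfl⟩, FreeGroup.mk_toWord.symm⟩

lemma famWords_rels {K : List (List ((α ⊕ Gen T) × Bool))}
    (hK : {g | ∃ w ∈ K, g = FreeGroup.mk w} = constRels T h R₁ C) (n : ℕ) :
    {g | ∃ w ∈ famWords T s₀ j₀ K n, g = FreeGroup.mk w} =
      sumRels R₁ (pRels T s₀ h j₀ n) C := by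
  rw [sumRels_pRels, ← hK]
  ext g
  simp [famWords]

lemma primrec_replicate {X : Type} [Primcodable X] (x : X) :
    Primrec fun n : ℕ => List.replicate n x := by
  have : Primrec fun n : ℕ => (List.range n).map fun _ => x :=
    Primrec.list_map Primrec.list_range (Primrec.const x).to₂
  refine this.of_eq fun n => ?_
  simp

lemma primrec_famWords {N : ℕ} (e : α ⊕ Gen T ≃ Fin N)
    (K : List (List ((α ⊕ Gen T) × Bool))) :
    Primrec fun n => (N, (famWords T s₀ j₀ K n).map (encWord e)) := by
  refine Primrec.pair (Primrec.const N) ?_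
  simp only [famWords, List.map_cons]
  refine Primrec.list_cons.comp ?_ (Primrec.const _)
  simp only [encWord, wWord, List.map_append, List.map_replicate, List.map_map]
  repeat' first
    | exact primrec_replicate _
    | exact Primrec.const _
    | refine Primrec.list_append.comp ?_ ?_

end Family

lemma codeRels_finite (c : ℕ × List (List (ℕ × Bool))) : (codeRels c).Finite := by
  refine ((List.finite_toSet c.2).image (wordToFree c.1)).subset ?_
  rintro g ⟨w, hw, rfl⟩
  exact ⟨w, hw, rfl⟩

/-- For a code `c`, there are codes computed from programs so that a halting program gives a group
isomorphic to that of `c`, and a non-halting one a group that is not commensurable with it. -/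
theorem exists_family (c : ℕ × List (List (ℕ × Bool))) :
    ∃ F : ℕ → ℕ × List (List (ℕ × Bool)), Primrec F ∧
      ∀ m, ((Nat.Partrec.Code.eval (Denumerable.ofNat Nat.Partrec.Code m) 0).Dom →
          Nonempty (codeGroup (F m) ≃* codeGroup c)) ∧
        (¬ (Nat.Partrec.Code.eval (Denumerable.ofNat Nat.Partrec.Code m) 0).Dom →
          ¬ GroupCommensurable (codeGroup (F m)) (codeGroup c)) := by
  obtain ⟨T, s₀, h, j₀, n, hn, hT⟩ := machine
  obtain ⟨N, ⟨e⟩⟩ := Finite.exists_equiv_fin (Fin c.1 ⊕ Gen T)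
  -- The codes attached to a choice of the mixed relators `C`.
  have key : ∀ C : Set (FreeGroup (Fin c.1 ⊕ Gen T)), C.Finite →
      ∃ F : ℕ → ℕ × List (List (ℕ × Bool)), Primrec F ∧ ∀ m, Nonempty (codeGroup (F m) ≃*
        PresentedGroup (sumRels (codeRels c) (pRels T s₀ h j₀ (n m)) C)) := by
    intro C hC
    obtain ⟨K, hK⟩ := exists_words (R := constRels T h (codeRels c) C)
      ((((codeRels_finite c).image _).union ((fixedRels_finite T h).image _)).union hC)
    refine ⟨fun m => (N, (famWords T s₀ j₀ K (n m)).map (encWord e)),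
      (primrec_famWords T s₀ j₀ e K).comp hn, fun m => ?_⟩
    rw [← famWords_rels T s₀ h j₀ (codeRels c) C hK]
    exact code_equiv e _
  rcases dichotomy (codeGroup c) with hd | hd
  · obtain ⟨F, hF, hF'⟩ := key ∅ Set.finite_empty
    refine ⟨F, hF, fun m => ⟨fun hm => ?_, fun hm hcm => ?_⟩⟩
    · obtain ⟨f⟩ := hF' m
      obtain ⟨g⟩ := sum_equiv_coprod (codeRels c) (pRels T s₀ h j₀ (n m))
      have := pres_trivial T s₀ h j₀ (n m) ((hT m).2 hm)
      obtain ⟨k⟩ := coprod_equiv_left (codeGroup c) (PresentedGroup (pRels T s₀ h j₀ (n m)))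
      exact ⟨(f.trans g).trans k⟩
    · obtain ⟨f⟩ := hF' m
      obtain ⟨g⟩ := sum_equiv_coprod (codeRels c) (pRels T s₀ h j₀ (n m))
      obtain ⟨z, hz⟩ := pres_infinite T s₀ h j₀ (n m) (fun hc => hm ((hT m).1 hc))
      exact hd _ z hz (GroupCommensurable.of_equiv_left (f.trans g) hcm)
  · obtain ⟨F, hF, hF'⟩ := key (crossComm (Fin c.1) (Gen T)) (Set.finite_range _)
    refine ⟨F, hF, fun m => ⟨fun hm => ?_, fun hm hcm => ?_⟩⟩
    · obtain ⟨f⟩ := hF' m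
      obtain ⟨g⟩ := sum_equiv_prod (codeRels c) (pRels T s₀ h j₀ (n m))
      have := pres_trivial T s₀ h j₀ (n m) ((hT m).2 hm)
      have : Unique (PresentedGroup (pRels T s₀ h j₀ (n m))) := Unique.mk' _
      exact ⟨(f.trans g).trans MulEquiv.prodUnique⟩
    · obtain ⟨f⟩ := hF' m
      obtain ⟨g⟩ := sum_equiv_prod (codeRels c) (pRels T s₀ h j₀ (n m))
      obtain ⟨z, hz⟩ := pres_infinite T s₀ h j₀ (n m) (fun hc => hm ((hT m).1 hc))
      exact hd _ z hz (GroupCommensurable.of_equiv_left (f.trans g) hcm)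

end CommSolv

/-- A nonempty class of finite presentations which is closed under isomorphism and within
which the commensurability problem is solvable cannot be a computable (recursive) set. -/
theorem comm_solvable_class_not_recursive
    (S : Set (ℕ × List (List (ℕ × Bool)))) (hne : S.Nonempty)
    (hclosed : ∀ c ∈ S, ∀ c' : ℕ × List (List (ℕ × Bool)),
      Nonempty (codeGroup c' ≃* codeGroup c) → c' ∈ S)
    (hd : ∃ d : (ℕ × List (List (ℕ × Bool))) × (ℕ × List (List (ℕ × Bool))) → Bool,
      Computable d ∧ ∀ c ∈ S, ∀ c' ∈ S,
        (d (c, c') = true ↔ GroupCommensurable (codeGroup c) (codeGroup c'))) :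
    ¬ ∃ m : ℕ × List (List (ℕ × Bool)) → Bool, Computable m ∧
        ∀ c : ℕ × List (List (ℕ × Bool)), m c = true ↔ c ∈ S := by
  rintro ⟨m, hm, hmS⟩
  obtain ⟨d, hdc, hdS⟩ := hd
  obtain ⟨c₀, hc₀⟩ := hne
  obtain ⟨F, hF, hF'⟩ := CommSolv.exists_family c₀
  refine ComputablePred.halting_problem 0 (ComputablePred.computable_iff.2
    ⟨fun p => m (F (Encodable.encode p)) && d (F (Encodable.encode p), c₀), ?_, ?_⟩)
  · have h1 : Computable fun p : Nat.Partrec.Code => F (Encodable.encode p) :=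
      hF.to_comp.comp Computable.encode
    exact Primrec.and.to_comp.comp (hm.comp h1) (hdc.comp (h1.pair (Computable.const c₀)))
  · funext p
    have hp := hF' (Encodable.encode p)
    rw [Denumerable.ofNat_encode] at hp
    rw [Bool.and_eq_true, hmS]
    refine propext ⟨fun h => ?_, fun h => ?_⟩
    · obtain ⟨f⟩ := hp.1 h
      have hS := hclosed c₀ hc₀ _ ⟨f⟩
      exact ⟨hS, (hdS _ hS _ hc₀).2 (CommSolv.GroupCommensurable.of_equiv f)⟩
    · by_contra hn
      exact hp.2 hn ((hdS _ h.1 _ hc₀).1 h.2)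
end

section
/- Let G and A be groups, let H := G * (A * A) be the free product of G with the free product A * A, and let F := G × (A * A) be the direct product of G with A * A. If H is commensurable with G and F is commensurable with G, then A is the trivial group. -/
/-!
Suppose `A ≠ 1` and put `B = A * A`. Reduced words show that `B` is infinite, and `G` is infinite
because it is commensurable with `G × B`. Intersecting the two finite-index subgroups of `G` gives
a group `N` embedded with finite index both in `G × B` and in `P = G * B`.

The first embedding provides nontrivial subgroups `K₁, K₂` of `P` (the images of `N ∩ G` and
`N ∩ B`) that commute elementwise and whose product contains a finite-index subgroup `K` of `P`.
The second makes this impossible (`no_commuting_pair`): in a free product the centralizer of a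
nontrivial element of a factor is contained in that factor
(`mem_range_inl_of_commute`). Take `1 ≠ g ∈ K ∩ G`, `g = k₁ k₂`. Both `k₁` and `k₂` commute with
`g`, so they lie in `G`. One of them is nontrivial, so the opposite `Kᵢ` lies in `G`; as that
`Kᵢ` is nontrivial, the other one lies in `G` as well. Hence `K ≤ G`, although `K` meets the
infinite group `B` nontrivially.
-/

open Monoid

/-! ### Centralizers in free products -/

/-- In a free product, the centralizer of a nontrivial element `g` of a factor is contained in that
factor: write `x = h t` with `h` in the factor and `t` reduced, not starting in the factor. If `t`
were nonempty, `t⁻¹ (h⁻¹ g h) t` would be a reduced word with at least three letters equal to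
the letter `g`. -/
theorem coprodI_mem_range_of_commute {ι : Type*} {M : ι → Type*} [∀ i, Group (M i)] {i : ι}
    {g : M i} (hg : g ≠ 1) {x : CoprodI M} (hx : Commute x (CoprodI.of g)) :
    ∃ h : M i, x = CoprodI.of h := by
  classical
  obtain ⟨w, rfl⟩ : ∃ w : CoprodI.Word M, w.prod = x :=
    ⟨CoprodI.Word.equiv x, CoprodI.Word.equiv.symm_apply_apply x⟩
  obtain ⟨p, rfl⟩ : ∃ p : CoprodI.Word.Pair M i, CoprodI.Word.rcons p = w :=
    ⟨CoprodI.Word.equivPair i w, (CoprodI.Word.equivPair i).symm_apply_apply w⟩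
  rw [CoprodI.Word.prod_rcons] at hx ⊢
  obtain ⟨h, t, ht⟩ := p
  dsimp only at hx ⊢
  by_cases hte : t = CoprodI.Word.empty
  · exact ⟨h, by rw [hte, CoprodI.Word.prod_empty, mul_one]⟩
  exfalso
  obtain ⟨j, k, w, rfl⟩ := CoprodI.NeWord.of_word t hte
  have hji : j ≠ i := by
    rintro rfl
    apply ht
    simp [CoprodI.Word.fstIdx, CoprodI.NeWord.toWord]
  have hg' : h⁻¹ * g * h ≠ 1 := by
    intro e
    apply hg
    have : g = h * (h⁻¹ * g * h) * h⁻¹ := by group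
    rw [this, e]; group
  let v : CoprodI.NeWord M k k :=
    (w.inv.append hji (.singleton (h⁻¹ * g * h) hg')).append hji.symm w
  have hv : v.prod = (CoprodI.NeWord.singleton g hg).prod := by
    simp only [v, CoprodI.NeWord.append_prod, CoprodI.NeWord.inv_prod,
      CoprodI.NeWord.prod_singleton, map_mul, map_inv]
    change CoprodI.of h * w.prod * CoprodI.of g = CoprodI.of g * (CoprodI.of h * w.prod) at hx
    have : (w.prod)⁻¹ * ((CoprodI.of h)⁻¹ * CoprodI.of g * CoprodI.of h) * w.prod
        = (CoprodI.of h * w.prod)⁻¹ * (CoprodI.of g * (CoprodI.of h * w.prod)) := by group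
    rw [this, ← hx, inv_mul_cancel_left]
  have hw : v.toWord = (CoprodI.NeWord.singleton g hg).toWord :=
    CoprodI.Word.equiv.symm.injective hv
  have hl := congrArg (fun u => u.toList.length) hw
  have h1 := List.length_pos_of_ne_nil w.toList_ne_nil
  have h2 := List.length_pos_of_ne_nil w.inv.toList_ne_nil
  simp [v, CoprodI.NeWord.toWord] at hl
  omega

universe u v

/-- The two-member family with members `G` and `B`, lifted to a common universe. -/
def pairFam (G : Type u) (B : Type v) : Bool → Type (max u v)
  | true => ULift.{v} G
  | false => ULift.{u} B

instance pairFamGroup (G : Type u) (B : Type v) [Group G] [Group B] :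
    ∀ b, Group (pairFam G B b)
  | true => inferInstanceAs (Group (ULift.{v} G))
  | false => inferInstanceAs (Group (ULift.{u} B))

/-- The inclusion of the binary free product into the indexed free product of `pairFam`. -/
def toCoprodI (G : Type u) (B : Type v) [Group G] [Group B] :
    Coprod G B →* CoprodI (pairFam G B) :=
  Coprod.lift
    ((CoprodI.of (M := pairFam G B) (i := true)).comp
      (MulEquiv.ulift : ULift.{v} G ≃* G).symm.toMonoidHom)
    ((CoprodI.of (M := pairFam G B) (i := false)).comp
      (MulEquiv.ulift : ULift.{u} B ≃* B).symm.toMonoidHom)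

/-- The retraction of `toCoprodI`. -/
def ofCoprodI (G : Type u) (B : Type v) [Group G] [Group B] :
    CoprodI (pairFam G B) →* Coprod G B :=
  CoprodI.lift fun b => match b with
    | true => Coprod.inl.comp (MulEquiv.ulift : ULift.{v} G ≃* G).toMonoidHom
    | false => Coprod.inr.comp (MulEquiv.ulift : ULift.{u} B ≃* B).toMonoidHom

theorem ofCoprodI_toCoprodI (G : Type u) (B : Type v) [Group G] [Group B] (x : Coprod G B) :
    ofCoprodI G B (toCoprodI G B x) = x := by
  have : (ofCoprodI G B).comp (toCoprodI G B) = MonoidHom.id _ := by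
    apply Coprod.hom_ext
    · ext g
      simp only [toCoprodI, ofCoprodI, MonoidHom.comp_apply, Coprod.lift_apply_inl]
      erw [CoprodI.lift_of]
    · ext g
      simp only [toCoprodI, ofCoprodI, MonoidHom.comp_apply, Coprod.lift_apply_inr]
      erw [CoprodI.lift_of]
  exact DFunLike.congr_fun this x

theorem mem_range_inl_of_commute {G : Type u} {B : Type v} [Group G] [Group B] {g : G}
    (hg : g ≠ 1) {x : Coprod G B} (hx : Commute x (Coprod.inl g)) :
    x ∈ (Coprod.inl : G →* Coprod G B).range := by
  have h1 : toCoprodI G B (Coprod.inl g) =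
      CoprodI.of (M := pairFam G B) (i := true) (ULift.up g) := by
    simp only [toCoprodI, Coprod.lift_apply_inl]; rfl
  have h2 := hx.map (toCoprodI G B)
  rw [h1] at h2
  obtain ⟨h, hh⟩ := coprodI_mem_range_of_commute
    (fun e => hg (congrArg ULift.down e)) h2
  refine ⟨ULift.down h, ?_⟩
  rw [← ofCoprodI_toCoprodI G B x, hh, ofCoprodI]
  erw [CoprodI.lift_of]
  rfl

/-! ### Infinitude of `A * A` -/

/-- The alternating word `(a a')ⁿ⁺¹`, with `a` and `a'` the two copies of the same element. -/
def altWord {A : Type*} [Group A] {a : A} (ha : a ≠ 1) :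
    ℕ → CoprodI.NeWord (fun _ : Bool => A) true false
  | 0 => (CoprodI.NeWord.singleton (i := true) a ha).append (by decide)
      (CoprodI.NeWord.singleton (i := false) a ha)
  | n + 1 => (altWord ha n).append (by decide) (altWord ha 0)

theorem altWord_length {A : Type*} [Group A] {a : A} (ha : a ≠ 1) (n : ℕ) :
    (altWord ha n).toList.length = 2 * n + 2 := by
  induction n with
  | zero => simp [altWord]
  | succ n ih =>
    have : (altWord ha 0).toList.length = 2 := by simp [altWord]
    rw [altWord, CoprodI.NeWord.toList, List.length_append, ih, this]
    omega

theorem infinite_coprod_self {A : Type*} [Group A] {a : A} (ha : a ≠ 1) :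
    Infinite (Coprod A A) := by
  classical
  have : Infinite (CoprodI (fun _ : Bool => A)) := by
    refine Infinite.of_injective (fun n => (altWord ha n).prod) fun m n hmn => ?_
    have hw : (altWord ha m).toWord = (altWord ha n).toWord :=
      CoprodI.Word.equiv.symm.injective hmn
    have hl : (altWord ha m).toList.length = (altWord ha n).toList.length :=
      congrArg (fun u => u.toList.length) hw
    rw [altWord_length, altWord_length] at hl
    omega
  let φ : Coprod A A →* CoprodI (fun _ : Bool => A) :=
    Coprod.lift (CoprodI.of (M := fun _ : Bool => A) (i := true))
      (CoprodI.of (M := fun _ : Bool => A) (i := false))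
  refine Infinite.of_surjective φ fun y => ?_
  induction y using CoprodI.induction_on with
  | one => exact ⟨1, map_one _⟩
  | of i m =>
    cases i
    · exact ⟨Coprod.inr m, Coprod.lift_apply_inr _ _ m⟩
    · exact ⟨Coprod.inl m, Coprod.lift_apply_inl _ _ m⟩
  | mul x y hx hy =>
    obtain ⟨x, rfl⟩ := hx
    obtain ⟨y, rfl⟩ := hy
    exact ⟨x * y, map_mul _ _ _⟩

/-! ### Finite-index subgroups -/

theorem index_comap_ne_zero {G H : Type*} [Group G] [Group H] (f : G →* H) {K : Subgroup H}
    (hK : K.index ≠ 0) : (K.comap f).index ≠ 0 := by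
  have : K.FiniteIndex := ⟨hK⟩
  rw [Subgroup.index_comap]
  exact Subgroup.FiniteIndex.index_ne_zero (H := K.subgroupOf f.range)

theorem exists_ne_one_map_mem {G H : Type*} [Group G] [Group H] [Infinite G] (f : G →* H)
    {K : Subgroup H} (hK : K.index ≠ 0) : ∃ g : G, g ≠ 1 ∧ f g ∈ K := by
  by_contra! hc
  have h : K.comap f = ⊥ := by
    rw [Subgroup.eq_bot_iff_forall]
    intro x hx
    by_contra hx1
    exact hc x hx1 hx
  have h0 := index_comap_ne_zero f hK
  rw [h, Subgroup.index_bot, Nat.card_eq_zero_of_infinite] at h0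
  exact h0 rfl

theorem GroupCommensurable.infinite {G H : Type*} [Group G] [Group H] [Infinite G]
    (h : GroupCommensurable G H) : Infinite H := by
  obtain ⟨K, L, hK, -, ⟨e⟩⟩ := h
  by_contra hH
  rw [not_infinite_iff_finite] at hH
  have hKf : Finite K := Finite.of_equiv L e.symm.toEquiv
  have : Finite G := (Subgroup.finite_iff_finite_and_finiteIndex (H := K)).2 ⟨hKf, ⟨hK⟩⟩
  exact not_finite G

/-- The product of two nontrivial elementwise commuting subgroups of a free product of infinite
groups contains no subgroup of finite index. -/
theorem no_commuting_pair {G B : Type*} [Group G] [Group B] [Infinite G] [Infinite B]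
    (K K₁ K₂ : Subgroup (Coprod G B)) (hK : K.index ≠ 0)
    (hc : ∀ x ∈ K₁, ∀ y ∈ K₂, Commute x y)
    (hmul : ∀ x ∈ K, ∃ y ∈ K₁, ∃ z ∈ K₂, x = y * z)
    (h₁ : ∃ x ∈ K₁, x ≠ 1) (h₂ : ∃ x ∈ K₂, x ≠ 1) : False := by
  have key : ∀ x : Coprod G B, x ∈ (Coprod.inl : G →* Coprod G B).range → x ≠ 1 →
      ∀ y, Commute y x → y ∈ (Coprod.inl : G →* Coprod G B).range := by
    rintro _ ⟨g, rfl⟩ hg y hy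
    exact mem_range_inl_of_commute (fun e => hg (by rw [e, map_one])) hy
  obtain ⟨u, hu, hu1⟩ := h₁
  obtain ⟨v, hv, hv1⟩ := h₂
  have hle : K₁ ≤ (Coprod.inl : G →* Coprod G B).range ∧
      K₂ ≤ (Coprod.inl : G →* Coprod G B).range := by
    obtain ⟨g, hg, hgK⟩ := exists_ne_one_map_mem (Coprod.inl : G →* Coprod G B) hK
    have hg1 : (Coprod.inl g : Coprod G B) ≠ 1 :=
      fun e => hg (Coprod.inl_injective (by rw [e, map_one]))
    obtain ⟨y, hy, z, hz, hyz⟩ := hmul _ hgK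
    have hyG := key _ ⟨g, rfl⟩ hg1 y
      (by rw [hyz]; exact (Commute.refl y).mul_right (hc y hy z hz))
    have hzG := key _ ⟨g, rfl⟩ hg1 z
      (by rw [hyz]; exact ((hc y hy z hz).symm).mul_right (Commute.refl z))
    by_cases hy1 : y = 1
    · have hz1 : z ≠ 1 := by
        rintro rfl
        exact hg1 (by rw [hyz, hy1, mul_one])
      have hK₁ : K₁ ≤ (Coprod.inl : G →* Coprod G B).range :=
        fun x hx => key z hzG hz1 x (hc x hx z hz)
      exact ⟨hK₁, fun x hx => key u (hK₁ hu) hu1 x (hc u hu x hx).symm⟩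
    · have hK₂ : K₂ ≤ (Coprod.inl : G →* Coprod G B).range :=
        fun x hx => key y hyG hy1 x (hc y hy x hx).symm
      exact ⟨fun x hx => key v (hK₂ hv) hv1 x (hc x hx v hv), hK₂⟩
  obtain ⟨b, hb, hbK⟩ := exists_ne_one_map_mem (Coprod.inr : B →* Coprod G B) hK
  obtain ⟨y, hy, z, hz, hyz⟩ := hmul _ hbK
  obtain ⟨g, hg⟩ : (Coprod.inr b : Coprod G B) ∈ (Coprod.inl : G →* Coprod G B).range := by
    rw [hyz]
    exact mul_mem (hle.1 hy) (hle.2 hz)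
  -- The projection to `B` kills `G` and fixes `B`.
  have := congrArg Coprod.snd hg
  rw [Coprod.snd_apply_inl, Coprod.snd_apply_inr] at this
  exact hb this.symm

/-- No group embeds with finite index both in the free and in the direct product of two given
infinite groups. -/
theorem no_common_subgroup {G B N : Type*} [Group G] [Group B] [Group N] [Infinite G] [Infinite B]
    (f : N →* Coprod G B) (e : N →* G × B) (hf : Function.Injective f)
    (he : Function.Injective e) (hfi : f.range.index ≠ 0) (hei : e.range.index ≠ 0) : False := by
  let T₁ : Subgroup G := e.range.comap (MonoidHom.inl G B)
  let T₂ : Subgroup B := e.range.comap (MonoidHom.inr G B)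
  have hT : (T₁.prod T₂).index ≠ 0 := by
    rw [Subgroup.index_prod]
    exact mul_ne_zero (index_comap_ne_zero _ hei) (index_comap_ne_zero _ hei)
  refine no_commuting_pair (((T₁.prod T₂).comap e).map f)
    (((MonoidHom.snd G B).ker.comap e).map f) (((MonoidHom.fst G B).ker.comap e).map f)
    ?_ ?_ ?_ ?_ ?_
  · rw [Subgroup.index_map_of_injective _ hf]
    exact mul_ne_zero (index_comap_ne_zero _ hT) hfi
  · rintro _ ⟨x, hx, rfl⟩ _ ⟨y, hy, rfl⟩
    refine Commute.map (he ?_) f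
    have hx' : (e x).2 = 1 := hx
    have hy' : (e y).1 = 1 := hy
    rw [map_mul, map_mul]
    ext <;> simp [hx', hy']
  · rintro _ ⟨x, ⟨⟨y, hy⟩, ⟨z, hz⟩⟩, rfl⟩
    refine ⟨f y, ⟨y, ?_, rfl⟩, f z, ⟨z, ?_, rfl⟩, ?_⟩
    · change (e y).2 = 1
      rw [hy]; rfl
    · change (e z).1 = 1
      rw [hz]; rfl
    · rw [← map_mul]
      congr 1
      apply he
      rw [map_mul, hy, hz]
      ext <;> simp
  · obtain ⟨g, hg, x, hx⟩ := exists_ne_one_map_mem (MonoidHom.inl G B) hei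
    refine ⟨f x, ⟨x, ?_, rfl⟩, fun h => ?_⟩
    · change (e x).2 = 1
      rw [hx]; rfl
    · rw [(map_eq_one_iff f hf).1 h, map_one] at hx
      exact hg (congrArg Prod.fst hx).symm
  · obtain ⟨b, hb, x, hx⟩ := exists_ne_one_map_mem (MonoidHom.inr G B) hei
    refine ⟨f x, ⟨x, ?_, rfl⟩, fun h => ?_⟩
    · change (e x).1 = 1
      rw [hx]; rfl
    · rw [(map_eq_one_iff f hf).1 h, map_one] at hx
      exact hb (congrArg Prod.snd hx).symm

/-- An isomorphism between finite-index subgroups `K ≤ P` and `L ≤ G` embeds any finite-index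
subgroup `N ≤ L` of `G` in `P` with finite index. -/
theorem exists_embedding {G P : Type*} [Group G] [Group P] {K : Subgroup P} {L N : Subgroup G}
    (hK : K.index ≠ 0) (φ : K ≃* L) (hNL : N ≤ L) (hN : N.index ≠ 0) :
    ∃ f : N →* P, Function.Injective f ∧ f.range.index ≠ 0 := by
  let ψ : L →* P := K.subtype.comp φ.symm.toMonoidHom
  have hψ : Function.Injective ψ := K.subtype_injective.comp φ.symm.injective
  have hψr : ψ.range = K := by
    ext x
    constructor
    · rintro ⟨y, rfl⟩
      exact (φ.symm y).2
    · intro hx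
      exact ⟨φ ⟨x, hx⟩, congrArg Subtype.val (φ.symm_apply_apply _)⟩
  refine ⟨ψ.comp (Subgroup.inclusion hNL), hψ.comp (Subgroup.inclusion_injective hNL), ?_⟩
  have hr : (Subgroup.inclusion hNL).range = N.comap L.subtype := Subgroup.inclusion_range hNL
  rw [MonoidHom.range_comp, hr, Subgroup.index_map_of_injective _ hψ, hψr]
  exact mul_ne_zero (index_comap_ne_zero _ hN) hK

/-- If both the free product `G * (A * A)` and the direct product `G × (A * A)` are
commensurable with `G`, then `A` is the trivial group. -/
theorem trivial_of_commensurable (G A : Type*) [Group G] [Group A]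
    (hH : GroupCommensurable (Coprod G (Coprod A A)) G)
    (hF : GroupCommensurable (G × Coprod A A) G) :
    ∀ a : A, a = 1 := by
  intro a
  by_contra ha
  have hB : Infinite (Coprod A A) := infinite_coprod_self ha
  have hG : Infinite G := hF.infinite
  obtain ⟨K, L, hK, hL, ⟨φ⟩⟩ := hH
  obtain ⟨K', L', hK', hL', ⟨φ'⟩⟩ := hF
  have hN : (L ⊓ L').index ≠ 0 := Subgroup.index_inf_ne_zero hL hL'
  obtain ⟨f, hf, hfi⟩ := exists_embedding hK φ inf_le_left hN
  obtain ⟨e, he, hei⟩ := exists_embedding hK' φ' inf_le_right hN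
  exact no_common_subgroup f e hf he hfi hei
end
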